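/- arXiv:1304.0745 — 2 statements merged into one kernel-verified Lean document; each statement's English description precedes it below -/
import Mathlib

section
/- Let R be a polynomial ring over an algebraically closed field K. Let I be an ideal of R of height two generated by quadrics, and suppose I is contained in a prime ideal p with ht(p) = 2 and e(R/p) = 3. Then pd(R/I) = 2; in particular R/I is Cohen–Macaulay. -/
open MvPolynomial Filter

universe u

/-- `PdLE R n M` means the `R`-module `M` has projective dimension at most `n`:
either `M` is projective (`n = 0`), or `M` is a quotient of a free module by a
submodule of projective dimension at most `n - 1`. -/
def PdLE (R : Type u) [CommRing R] : ℕ → (M : Type u) → [AddCommGroup M] → [Module R M] → Prop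
  | 0, M, _, _ => Module.Projective R M
  | n + 1, M, _, _ => ∃ (F : Type u) (_ : AddCommGroup F) (_ : Module R F),
      Module.Free R F ∧ ∃ f : F →ₗ[R] M, Function.Surjective f ∧ PdLE R n (LinearMap.ker f)

/-- The projective dimension of an `R`-module `M`, as an element of `ℕ∞`
(`⊤` if `M` has no finite free resolution). -/
noncomputable def projDim (R : Type u) [CommRing R] (M : Type u) [AddCommGroup M]
    [Module R M] : ℕ∞ :=
  sInf ((fun n : ℕ => (n : ℕ∞)) '' {n : ℕ | PdLE R n M})

/-- The height of an ideal: the infimum of the heights of the prime ideals containing it. -/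
noncomputable def idealHeight {R : Type*} [CommRing R] (I : Ideal R) : ℕ∞ :=
  ⨅ p ∈ {p : PrimeSpectrum R | I ≤ p.asIdeal}, Order.height p

/-- The length of a module, defined as the Krull dimension of its lattice of submodules. -/
noncomputable def moduleLength (R : Type u) [CommRing R] (M : Type u) [AddCommGroup M]
    [Module R M] : WithBot ℕ∞ :=
  Order.krullDim (Submodule R M)

/-- `IsHSMultiplicity R mx I e` asserts that the Hilbert–Samuel multiplicity of `R/I`
with respect to the ideal `mx` equals `e`: for `d = dim R/I` there is a polynomial `P`
of degree `d` with `e = d! · (leading coefficient of P)` such that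
`length (R/(I + mx^n)) = P(n)` for all large `n`. -/
def IsHSMultiplicity (R : Type u) [CommRing R] (mx I : Ideal R) (e : ℕ) : Prop :=
  ∃ (d : ℕ) (P : Polynomial ℚ),
    ringKrullDim (R ⧸ I) = (d : WithBot ℕ∞) ∧
    P.natDegree = d ∧
    (e : ℚ) = P.leadingCoeff * d.factorial ∧
    ∀ᶠ n : ℕ in Filter.atTop, ∃ k : ℕ, (k : ℚ) = P.eval (n : ℚ) ∧
      moduleLength R (R ⧸ (I ⊔ mx ^ n)) = ((k : ℕ∞) : WithBot ℕ∞)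

/-- A matrix over a `K`-algebra is `1`-generic if it has no generalized zero entry:
for every nonzero vectors `u`, `v` of scalars, `uᵀ M v ≠ 0`. -/
def OneGeneric (K : Type*) [Field K] {R : Type u} [CommRing R] [Algebra K R]
    {m l : ℕ} (M : Matrix (Fin m) (Fin l) R) : Prop :=
  ∀ (u : Fin m → K) (v : Fin l → K), u ≠ 0 → v ≠ 0 →
    ∑ i, ∑ j, algebraMap K R (u i * v j) * M i j ≠ 0

/-- The ideal of all `2 × 2` minors of a `2 × l` matrix. -/
def minors2 {R : Type u} [CommRing R] {l : ℕ} (M : Matrix (Fin 2) (Fin l) R) : Ideal R :=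
  Ideal.span (Set.range fun p : Fin l × Fin l => M 0 p.1 * M 1 p.2 - M 0 p.2 * M 1 p.1)

/-- The homogeneous maximal ideal of a polynomial ring. -/
noncomputable def maxIdeal (K : Type*) [Field K] (σ : Type*) : Ideal (MvPolynomial σ K) :=
  Ideal.span (Set.range (X : σ → MvPolynomial σ K))

/-- The ideal represented by minors by the `2 × (n+1)` matrix with first column `(x, y)ᵀ`
and remaining columns `(u j, v j)ᵀ`: it is generated by the `2 × 2` minors involving
the first column. -/
def repByMinors {R : Type u} [CommRing R] {n : ℕ} (x y : R) (u v : Fin n → R) : Ideal R :=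
  Ideal.span (Set.range fun j : Fin n => x * v j - y * u j)


section PD

variable {R : Type u} [CommRing R]

theorem aux_relprime_syz [IsDomain R] [UniqueFactorizationMonoid R] {q1 q2 u v : R}
    (h : IsRelPrime q1 q2) (h1 : q1 ≠ 0) (he : u * q1 = v * q2) :
    ∃ t, v = t * q1 ∧ u = t * q2 := by
  have : q1 ∣ v := by
    have h3 : q1 ∣ v * q2 := ⟨u, by rw [← he]; ring⟩
    exact h.dvd_of_dvd_mul_right h3
  obtain ⟨t, rfl⟩ := this
  refine ⟨t, by ring, ?_⟩
  apply mul_right_cancel₀ h1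
  rw [he]; ring

theorem pd_ideal_of {n m : ℕ} (I : Ideal R) (q : Fin n → R) (hI : I = Ideal.span (Set.range q))
    (M : Fin m → Fin n → R)
    (hM : ∀ j, ∑ i, M j i * q i = 0)
    (hinj : ∀ u : Fin m → R, (∀ i, ∑ j, u j * M j i = 0) → u = 0)
    (hex : ∀ r : Fin n → R, ∑ i, r i * q i = 0 → ∃ u : Fin m → R, ∀ i, r i = ∑ j, u j * M j i) :
    PdLE R 2 (R ⧸ I) := by
  refine ⟨R, inferInstance, inferInstance, inferInstance, I.mkQ, Submodule.mkQ_surjective _, ?_⟩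
  have hk : LinearMap.ker I.mkQ = I := Submodule.ker_mkQ _
  rw [hk]
  have hq : ∀ i, q i ∈ I := fun i => hI ▸ Ideal.subset_span ⟨i, rfl⟩
  let f : (Fin n → R) →ₗ[R] I := Fintype.linearCombination R (fun i => (⟨q i, hq i⟩ : I))
  have hf : ∀ r, (f r : R) = ∑ i, r i * q i := by
    intro r
    simp [f, Fintype.linearCombination_apply]
  refine ⟨Fin n → R, inferInstance, inferInstance, inferInstance, f, ?_, ?_⟩
  · rintro ⟨x, hx⟩
    rw [hI, Ideal.mem_span_range_iff_exists_fun] at hx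
    obtain ⟨c, hc⟩ := hx
    exact ⟨c, Subtype.ext (by rw [hf]; exact hc)⟩
  · let g : (Fin m → R) →ₗ[R] (Fin n → R) := Fintype.linearCombination R M
    have hg : ∀ u i, g u i = ∑ j, u j * M j i := by
      intro u i
      simp [g, Fintype.linearCombination_apply]
    have hr : LinearMap.range g = LinearMap.ker f := by
      ext r
      constructor
      · rintro ⟨u, rfl⟩
        rw [LinearMap.mem_ker]
        apply Subtype.ext
        rw [hf]
        simp only [hg, Finset.sum_mul]
        rw [Finset.sum_comm]
        simp only [mul_assoc, ← Finset.mul_sum, hM]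
        simp
      · intro h
        have h2 : ∑ i, r i * q i = 0 := by rw [← hf, LinearMap.mem_ker.1 h]; rfl
        obtain ⟨u, hu⟩ := hex r h2
        exact ⟨u, by ext i; rw [hg, hu]⟩
    have hgi : Function.Injective g := by
      rw [← LinearMap.ker_eq_bot, LinearMap.ker_eq_bot']
      intro u hu
      apply hinj
      intro i
      rw [← hg, hu]; rfl
    exact Module.Projective.of_equiv ((LinearEquiv.ofInjective g hgi).trans (LinearEquiv.ofEq _ _ hr))

theorem pd_ci [IsDomain R] [UniqueFactorizationMonoid R] (q1 q2 : R) (h : IsRelPrime q1 q2)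
    (h1 : q1 ≠ 0) (I : Ideal R) (hI : I = Ideal.span {q1, q2}) : PdLE R 2 (R ⧸ I) := by
  refine pd_ideal_of (m := 1) I ![q1, q2] (by rw [hI]; congr 1; ext z; simp [eq_comm]; tauto) (fun _ => ![q2, -q1])
    ?_ ?_ ?_
  · intro j; simp [Fin.sum_univ_two]; ring
  · intro u hu
    have := hu 1
    simp [h1] at this
    ext i; fin_cases i; simpa using this
  · intro r hr
    simp [Fin.sum_univ_two] at hr
    obtain ⟨t, h3, h4⟩ := aux_relprime_syz (u := r 0) (v := - r 1) h h1 (by linear_combination hr)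
    refine ⟨fun _ => t, ?_⟩
    intro i; fin_cases i
    · simp [h4]
    · simp; linear_combination -h3

theorem pd_hb [IsDomain R] [UniqueFactorizationMonoid R] (q1 q2 q3 x y a b c d s t : R)
    (h : IsRelPrime q1 q2) (h1 : q1 ≠ 0) (h2 : q2 ≠ 0) (h3 : q3 ≠ 0) (hx : x ≠ 0)
    (hst : s * t = 1)
    (e1 : x * q3 = a * q1 + b * q2) (e2 : y * q3 = c * q1 + d * q2)
    (d1 : x * d - y * b = s * q1) (d2 : y * a - x * c = s * q2)
    (I : Ideal R) (hI : I = Ideal.span {q1, q2, q3}) : PdLE R 2 (R ⧸ I) := by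
  have hs : s ≠ 0 := by rintro rfl; simp at hst
  refine pd_ideal_of (m := 2) I ![q1, q2, q3] (by rw [hI]; congr 1; ext z; simp [eq_comm]; tauto)
    ![![a, b, -x], ![c, d, -y]] ?_ ?_ ?_
  · intro j; fin_cases j
    · simp [Fin.sum_univ_three]; linear_combination -e1
    · simp [Fin.sum_univ_three]; linear_combination -e2
  · intro u hu
    have g0 := hu 0
    have g2 := hu 2
    simp [Fin.sum_univ_two] at g0 g2
    have k1 : u 1 * (s * q2) = 0 := by rw [← d2]; linear_combination (-x) * g0 - a * g2
    have k2 : u 0 * (s * q2) = 0 := by rw [← d2]; linear_combination (y) * g0 + c * g2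
    simp [hs, h2] at k1 k2
    ext i; fin_cases i <;> simp [k1, k2]
  · intro r hr
    simp [Fin.sum_univ_three] at hr
    obtain ⟨h', p1, p2⟩ := aux_relprime_syz (u := x * r 0 + r 2 * a) (v := - (x * r 1 + r 2 * b)) h h1
      (by linear_combination x * hr - r 2 * e1)
    obtain ⟨k, p3, p4⟩ := aux_relprime_syz (u := y * r 0 + r 2 * c) (v := - (y * r 1 + r 2 * d)) h h1
      (by linear_combination y * hr - r 2 * e2)
    have r3 : s * r 2 = y * h' - x * k := by
      apply mul_right_cancel₀ h2
      linear_combination y * p2 - x * p4 - r 2 * d2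
    have r1 : s * r 0 = k * a - h' * c := by
      apply mul_left_cancel₀ hx
      linear_combination s * p2 - a * r3 - h' * d2
    have r2 : s * r 1 = k * b - h' * d := by
      apply mul_left_cancel₀ hx
      linear_combination -s * p1 - b * r3 + h' * d1
    refine ⟨![t * k, - t * h'], ?_⟩
    intro i; fin_cases i
    · simp [Fin.sum_univ_two]; linear_combination t * r1 - r 0 * hst
    · simp [Fin.sum_univ_two]; linear_combination t * r2 - r 1 * hst
    · simp [Fin.sum_univ_two]; linear_combination t * r3 - r 2 * hst

theorem proj_of_pd1 (I : Ideal R) (h : PdLE R 1 (R ⧸ I)) : Module.Projective R I := by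
  obtain ⟨F, _, _, hF, f, hf, hp⟩ := h
  have hp : Module.Projective R (LinearMap.ker f) := hp
  obtain ⟨g, hg⟩ := Module.projective_lifting_property f I.mkQ hf
  obtain ⟨k, hk⟩ := Module.projective_lifting_property I.mkQ f (Submodule.mkQ_surjective I)
  have hg' : ∀ r, f (g r) = I.mkQ r := fun r => LinearMap.congr_fun hg r
  have hk' : ∀ r, I.mkQ (k r) = f r := fun r => LinearMap.congr_fun hk r
  -- I → ker f × R : i ↦ (-(g i), i)... retraction
  let i1 : I →ₗ[R] (LinearMap.ker f) × R :=
    LinearMap.prod (LinearMap.codRestrict _ (-(g ∘ₗ I.subtype)) (by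
      intro c
      have : I.mkQ (c : R) = 0 := by rw [← LinearMap.mem_ker, Submodule.ker_mkQ]; exact c.2
      rw [LinearMap.mem_ker, LinearMap.neg_apply, map_neg, LinearMap.comp_apply, hg', neg_eq_zero]
      exact this)) I.subtype
  let s1 : (LinearMap.ker f) × R →ₗ[R] I :=
    LinearMap.codRestrict I ((LinearMap.snd R _ R) - k ∘ₗ (
      (LinearMap.ker f).subtype ∘ₗ LinearMap.fst R _ R + g ∘ₗ LinearMap.snd R _ R)) (by
      rintro ⟨⟨c, hc⟩, r⟩
      refine (Submodule.Quotient.mk_eq_zero I).1 ?_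
      rw [← Submodule.mkQ_apply]
      rw [LinearMap.mem_ker] at hc
      simp only [LinearMap.sub_apply, LinearMap.comp_apply, LinearMap.add_apply, map_sub, hk',
        map_add, hg', LinearMap.fst_apply, LinearMap.snd_apply, Submodule.subtype_apply, hc]
      simp)
  refine Module.Projective.of_split i1 s1 ?_
  ext x
  simp [i1, s1]

theorem not_pd1 [IsDomain R] [UniqueFactorizationMonoid R] (I : Ideal R) (hI : I ≠ ⊤)
    (q1 q2 : R) (m1 : q1 ∈ I) (m2 : q2 ∈ I) (h : IsRelPrime q1 q2) (h1 : q1 ≠ 0)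
    (hp : Module.Projective R I) : False := by
  obtain ⟨s, hs⟩ := Module.projective_def'.1 hp
  have key : ∀ i : I, ∃ c, s ⟨q1, m1⟩ i = c * q1 := by
    intro i
    have : (q2 • s ⟨q1, m1⟩) i = (q1 • s ⟨q2, m2⟩) i := by
      rw [← map_smul, ← map_smul]
      congr 2
      apply Subtype.ext
      simp [mul_comm]
    simp only [Finsupp.smul_apply, smul_eq_mul] at this
    have h3 : q1 ∣ s ⟨q1, m1⟩ i * q2 := ⟨_, by rw [← this]; ring⟩
    obtain ⟨c, hc⟩ := h.dvd_of_dvd_mul_right h3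
    exact ⟨c, by rw [hc]; ring⟩
  choose c hc using key
  have h4 := LinearMap.congr_fun hs ⟨q1, m1⟩
  have h5 := congrArg (Subtype.val) h4
  simp only [LinearMap.comp_apply, Finsupp.linearCombination_apply, Finsupp.sum, id,
    LinearMap.id_apply, AddSubmonoidClass.coe_finsetSum, Submodule.coe_smul, hc] at h5
  apply hI
  rw [Ideal.eq_top_iff_one]
  have h6 : (∑ x ∈ (s ⟨q1, m1⟩).support, c x * (x : R)) = 1 := by
    apply mul_left_cancel₀ h1
    rw [mul_one, Finset.mul_sum]
    refine Eq.trans (Finset.sum_congr rfl ?_) h5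
    intro x _
    simp; ring
  rw [← h6]
  exact Ideal.sum_mem _ fun x _ => I.mul_mem_left _ x.2

theorem projDim_eq_two [IsDomain R] [UniqueFactorizationMonoid R] (I : Ideal R) (hI : I ≠ ⊤)
    (q1 q2 : R) (m1 : q1 ∈ I) (m2 : q2 ∈ I) (h : IsRelPrime q1 q2) (h1 : q1 ≠ 0)
    (hpd : PdLE R 2 (R ⧸ I)) : projDim R (R ⧸ I) = 2 := by
  unfold projDim
  apply le_antisymm
  · exact sInf_le ⟨2, hpd, rfl⟩
  · apply le_sInf
    rintro _ ⟨n, hn, rfl⟩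
    have : 2 ≤ n := by
      by_contra hlt
      have : n = 0 ∨ n = 1 := by omega
      rcases this with rfl | rfl
      · refine not_pd1 I hI q1 q2 m1 m2 h h1 (proj_of_pd1 I ?_)
        have hn : Module.Projective R (R ⧸ I) := hn
        refine ⟨R, inferInstance, inferInstance, inferInstance, I.mkQ, Submodule.mkQ_surjective _, ?_⟩
        obtain ⟨g, hg⟩ := Module.projective_lifting_property I.mkQ LinearMap.id (Submodule.mkQ_surjective I)
        have hg' : ∀ r, I.mkQ (g r) = r := fun r => LinearMap.congr_fun hg r
        refine Module.Projective.of_split (LinearMap.ker I.mkQ).subtype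
          (LinearMap.codRestrict _ (LinearMap.id - g ∘ₗ I.mkQ) (by
            intro r
            rw [LinearMap.mem_ker]
            simp only [LinearMap.sub_apply, LinearMap.comp_apply, map_sub, hg']
            simp)) ?_
        ext x
        have hx := x.2
        rw [LinearMap.mem_ker] at hx
        simp only [LinearMap.comp_apply, LinearMap.codRestrict_apply, LinearMap.sub_apply, Submodule.subtype_apply, hx]
        simp
      · exact not_pd1 I hI q1 q2 m1 m2 h h1 (proj_of_pd1 I hn)
    show (2 : ℕ∞) ≤ (n : ℕ∞)
    exact_mod_cast this

end PD

section CORE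

variable {A C : Type*} [CommRing A] [IsDomain A] [CommRing C] [Algebra A C]

theorem core_dep [Module.Finite A C] [IsNoetherianRing A]
    (hT : ∀ (a : A) (c : C), a • c = 0 → a = 0 ∨ c = 0)
    (N : Submodule A C) (hN : Module.finrank A N ≤ 1) {u v : C} (hu : u ∈ N) (hv : v ∈ N)
    (hu0 : u ≠ 0) : ∃ s t : A, t ≠ 0 ∧ t • v = s • u := by
  by_contra hcon
  push Not at hcon
  have hli : LinearIndependent A ![(⟨u, hu⟩ : N), ⟨v, hv⟩] := by
    rw [LinearIndependent.pair_iff]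
    intro s t hst
    have hst' : s • u + t • v = 0 := congrArg Subtype.val hst
    have ht : t = 0 := by
      by_contra ht
      refine hcon (-s) t ht ?_
      rw [neg_smul]; exact eq_neg_of_add_eq_zero_right hst'
    subst ht
    rw [zero_smul, add_zero] at hst'
    exact ⟨(hT _ _ hst').resolve_right hu0, rfl⟩
  have := hli.fintype_card_le_finrank
  simp at this
  omega

theorem core_b [Module.Finite A C] [IsNoetherianRing A]
    (hT : ∀ (a : A) (c : C), a • c = 0 → a = 0 ∨ c = 0)
    (N : Submodule A C) (hN : Module.finrank A N ≤ 1) {u v y : C} (hu : u ∈ N) (hv : v ∈ N)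
    (hu0 : u ≠ 0) (hy : y * u = 0) : y * v = 0 := by
  obtain ⟨s, t, ht, h⟩ := core_dep hT N hN hu hv hu0
  have : t • (y * v) = 0 := by
    rw [← mul_smul_comm, h, mul_smul_comm, hy, smul_zero]
  exact (hT _ _ this).resolve_left ht

theorem core_a [Module.Finite A C] [IsNoetherianRing A] [IsIntegrallyClosed A]
    (hT : ∀ (a : A) (c : C), a • c = 0 → a = 0 ∨ c = 0)
    (N : Submodule A C) (hN : Module.finrank A N ≤ 1) {q y : C} (hq : q ∈ N) (hyq : y * q ∈ N)
    (hq0 : q ≠ 0) : ∃ α : A, (y - algebraMap A C α) * q = 0 := by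
  obtain ⟨s, t, ht, h⟩ := core_dep hT N hN hq hyq hq0
  let F := FractionRing A
  set z : F := algebraMap A F s / algebraMap A F t with hz
  have htF : algebraMap A F t ≠ 0 := by
    simpa using ht
  have hpow : ∀ n : ℕ, t ^ n • (y ^ n * q) = s ^ n • q := by
    intro n
    induction n with
    | zero => simp
    | succ n ih =>
      calc t ^ (n+1) • (y ^ (n+1) * q) = y ^ n * (t ^ n • (t • (y * q))) := by
            simp only [Algebra.smul_def, map_pow]; ring
        _ = s • (t ^ n • (y ^ n * q)) := by rw [h]; simp only [Algebra.smul_def, map_pow]; ring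
        _ = _ := by rw [ih]; simp only [Algebra.smul_def, map_pow]; ring
  have key : ∀ g : Polynomial A, ∃ (n : ℕ) (c : A), t ^ n • (Polynomial.aeval y g * q) = c • q ∧
      algebraMap A F c = algebraMap A F t ^ n * Polynomial.aeval z g := by
    intro g
    induction g using Polynomial.induction_on' with
    | add g1 g2 h1 h2 =>
      obtain ⟨n1, c1, e1, f1⟩ := h1
      obtain ⟨n2, c2, e2, f2⟩ := h2
      refine ⟨n1 + n2, t ^ n2 * c1 + t ^ n1 * c2, ?_, ?_⟩
      · calc t ^ (n1 + n2) • (Polynomial.aeval y (g1 + g2) * q)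
            = t ^ n2 • (t ^ n1 • (Polynomial.aeval y g1 * q))
              + t ^ n1 • (t ^ n2 • (Polynomial.aeval y g2 * q)) := by
              rw [map_add]; simp only [Algebra.smul_def, map_pow]; ring
          _ = _ := by rw [e1, e2]; simp only [Algebra.smul_def, map_pow, map_add, map_mul]; ring
      · simp only [map_add, map_mul, map_pow, f1, f2]; ring
    | monomial n a =>
      refine ⟨n, a * s ^ n, ?_, ?_⟩
      · rw [Polynomial.aeval_monomial, mul_smul, ← hpow]
        simp only [Algebra.smul_def, map_pow]; ring
      · rw [Polynomial.aeval_monomial, hz, map_mul, map_pow, div_pow, mul_left_comm,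
          mul_div_cancel₀ _ (pow_ne_zero _ htF)]
  have hint : IsIntegral A y := Algebra.IsIntegral.isIntegral y
  obtain ⟨g, hg, hgy⟩ := hint
  obtain ⟨n, c, e, f⟩ := key g
  have hgy' : Polynomial.aeval y g = 0 := hgy
  rw [hgy', zero_mul, smul_zero] at e
  have hc : c = 0 := (hT _ _ e.symm).resolve_right hq0
  rw [hc, map_zero] at f
  have hz0 : Polynomial.aeval z g = 0 := by
    rcases mul_eq_zero.1 f.symm with h1 | h1
    · exact absurd h1 (pow_ne_zero _ htF)
    · exact h1
  obtain ⟨α, hα⟩ := IsIntegrallyClosed.isIntegral_iff.1 (⟨g, hg, hz0⟩ : IsIntegral A z)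
  have hs : s = t * α := by
    apply IsFractionRing.injective A F
    rw [map_mul, hα, hz, mul_div_cancel₀ _ htF]
  refine ⟨α, ?_⟩
  have : t • ((y - algebraMap A C α) * q) = 0 := by
    rw [sub_mul, smul_sub, h, hs, ← Algebra.smul_def, mul_smul, sub_self]
  exact (hT _ _ this).resolve_left ht

/-- rank bound for the kernel -/
theorem core_rank [Module.Finite A C] [IsNoetherianRing A] {B : Type*} [AddCommGroup B] [Module A B]
    (g : Fin 4 → C) (hg : Submodule.span A (Set.range g) = ⊤)
    (π : C →ₗ[A] B) (hπ : Function.Surjective π) (hB : 3 ≤ Module.finrank A B) :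
    Module.finrank A (LinearMap.ker π) ≤ 1 := by
  have h1 := Submodule.finrank_quotient_add_finrank (LinearMap.ker π)
  rw [(π.quotKerEquivOfSurjective hπ).finrank_eq] at h1
  have h2 : Module.finrank A C ≤ 4 := by
    rw [← finrank_top, ← hg]
    have := finrank_range_le_card (R := A) g
    simpa [Set.finrank] using this
  omega

end CORE

section TF

open Polynomial in
theorem tf_dvd {B : Type*} [CommRing B] (a : B) (D h : B[X]) (hD : D.Monic) (hdvd : Polynomial.C a ∣ D * h) :
    Polynomial.C a ∣ h := by
  have hmap : ∀ g : B[X], Polynomial.C a ∣ g ↔ g.map (Ideal.Quotient.mk (Ideal.span {a})) = 0 := by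
    intro g
    rw [Polynomial.C_dvd_iff_dvd_coeff, Polynomial.ext_iff]
    simp [Ideal.Quotient.eq_zero_iff_mem, Ideal.mem_span_singleton]
  rw [hmap] at hdvd ⊢
  rw [Polynomial.map_mul] at hdvd
  exact ((hD.map _).mul_right_eq_zero_iff).1 hdvd

open Polynomial in
theorem tf_main {A : Type*} [CommRing A] [IsDomain A] (f1 f2 u w : A[X][X]) (D : A[X])
    (hf1 : f1.Monic) (hD : D.Monic) (hDe : Polynomial.C D = u * f1 + w * f2) (a : A) (ha : a ≠ 0)
    (g : A[X][X]) (hg : Polynomial.C (Polynomial.C a) * g ∈ Ideal.span {f1, f2}) : g ∈ Ideal.span {f1, f2} := by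
  rw [Ideal.mem_span_pair] at hg ⊢
  obtain ⟨s, t, hst⟩ := hg
  have h1 : Polynomial.C D * t = Polynomial.C (Polynomial.C a) * (w * g) + (t * u - s * w) * f1 := by
    rw [hDe]; linear_combination w * hst
  have h2 : Polynomial.C D * (t %ₘ f1) = Polynomial.C (Polynomial.C a) * ((w * g) %ₘ f1) := by
    have := congrArg (· %ₘ f1) h1
    simp only [add_modByMonic, ← Polynomial.smul_eq_C_mul, smul_modByMonic] at this
    rw [(modByMonic_eq_zero_iff_dvd hf1).2 (Dvd.intro_left _ rfl), add_zero] at this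
    simpa only [Polynomial.smul_eq_C_mul] using this
  have h3 : Polynomial.C (Polynomial.C a) ∣ t %ₘ f1 := by
    rw [Polynomial.C_dvd_iff_dvd_coeff]
    intro i
    apply tf_dvd a D _ hD
    have := congrArg (fun p => p.coeff i) h2
    simp only [Polynomial.coeff_C_mul] at this
    rw [this]
    exact Dvd.intro _ rfl
  obtain ⟨t', ht'⟩ := h3
  have h4 := modByMonic_add_div t f1
  have h5 : Polynomial.C (Polynomial.C a) * (g - t' * f2) = f1 * (s + (t /ₘ f1) * f2) := by
    linear_combination (-1 : A[X][X]) * hst - f2 * h4 + f2 * ht'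
  have h6 : Polynomial.C (Polynomial.C a) ∣ s + (t /ₘ f1) * f2 := tf_dvd (Polynomial.C a) f1 _ hf1 ⟨_, h5.symm⟩
  obtain ⟨s', hs'⟩ := h6
  refine ⟨s', t', ?_⟩
  have hne : (Polynomial.C (Polynomial.C a) : A[X][X]) ≠ 0 := by simpa using ha
  apply mul_left_cancel₀ hne
  rw [hs'] at h5
  linear_combination -h5

end TF

section HOM

variable {K : Type u} [Field K] {σ : Type*}

theorem hom_const_of_totalDegree {h : MvPolynomial σ K} (hh : h.totalDegree = 0) :
    ∃ c : K, h = C c := ⟨_, totalDegree_eq_zero_iff_eq_C.1 hh⟩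

theorem hom_dvd {n : ℕ} {f g h : MvPolynomial σ K} (hf : f.IsHomogeneous n) (hg : g.IsHomogeneous n)
    (hg0 : g ≠ 0) (hfg : f = h * g) : ∃ c : K, h = C c := by
  by_cases hh : h = 0
  · exact ⟨0, by simp [hh]⟩
  have hf0 : f ≠ 0 := by rw [hfg]; exact mul_ne_zero hh hg0
  apply hom_const_of_totalDegree
  have h1 := totalDegree_mul_of_isDomain hh hg0
  rw [← hfg, hf.totalDegree hf0, hg.totalDegree hg0] at h1
  omega

theorem hom_comp_mul {n : ℕ} {q : MvPolynomial σ K} (hq : q.IsHomogeneous n) (m : ℕ)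
    (g : MvPolynomial σ K) :
    homogeneousComponent (m + n) (g * q) = homogeneousComponent m g * q := by
  conv_lhs => rw [← sum_homogeneousComponent g, Finset.sum_mul, map_sum]
  have h1 : ∀ i, homogeneousComponent (m + n) (homogeneousComponent i g * q) =
      if i = m then homogeneousComponent m g * q else 0 := by
    intro i
    have h2 := (homogeneousComponent_isHomogeneous i g).mul hq
    split_ifs with h
    · subst h
      rw [homogeneousComponent_of_mem h2, if_pos rfl]
    · rw [homogeneousComponent_of_mem h2, if_neg (by omega)]
  simp_rw [h1]
  rw [Finset.sum_ite_eq']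
  split_ifs with h
  · rfl
  · rw [homogeneousComponent_eq_zero, zero_mul]
    simpa using h

/-- degree `m+n` part of membership in ideal generated by two forms of degree `n` -/
theorem hom_mem_pair {n m : ℕ} {q1 q2 q g : MvPolynomial σ K} (h1 : q1.IsHomogeneous n)
    (h2 : q2.IsHomogeneous n) (hq : q.IsHomogeneous n) (h : g * q ∈ Ideal.span {q1, q2}) :
    ∃ a b : MvPolynomial σ K, a.IsHomogeneous m ∧ b.IsHomogeneous m ∧
      homogeneousComponent m g * q = a * q1 + b * q2 := by
  rw [Ideal.mem_span_pair] at h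
  obtain ⟨a, b, hab⟩ := h
  refine ⟨homogeneousComponent m a, homogeneousComponent m b,
    homogeneousComponent_isHomogeneous _ _, homogeneousComponent_isHomogeneous _ _, ?_⟩
  rw [← hom_comp_mul hq, ← hom_comp_mul h1, ← hom_comp_mul h2, ← hab, map_add]

theorem hom_mem_pair' {n : ℕ} {q1 q2 q : MvPolynomial σ K} (h1 : q1.IsHomogeneous n)
    (h2 : q2.IsHomogeneous n) (hq : q.IsHomogeneous n) (h : q ∈ Ideal.span {q1, q2}) :
    q ∈ Submodule.span K {q1, q2} := by
  obtain ⟨a, b, ha, hb, h3⟩ := hom_mem_pair (g := 1) (m := 0) h1 h2 hq (by simpa using h)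
  obtain ⟨α, rfl⟩ := hom_const_of_totalDegree (Nat.le_zero.1 ha.totalDegree_le)
  obtain ⟨β, rfl⟩ := hom_const_of_totalDegree (Nat.le_zero.1 hb.totalDegree_le)
  rw [Submodule.mem_span_pair]
  refine ⟨α, β, ?_⟩
  rw [homogeneousComponent_of_mem (isHomogeneous_one σ K), if_pos rfl, one_mul] at h3
  rw [h3, C_mul', C_mul']

theorem hom_map {τ : Type*} (j : MvPolynomial τ K →ₐ[K] MvPolynomial σ K)
    (hj : ∀ n a, a.IsHomogeneous n → (j a).IsHomogeneous n) (n : ℕ) (a : MvPolynomial τ K) :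
    homogeneousComponent n (j a) = j (homogeneousComponent n a) := by
  conv_lhs => rw [← sum_homogeneousComponent a, map_sum, map_sum]
  have h1 : ∀ i, homogeneousComponent n (j (homogeneousComponent i a)) =
      if i = n then j (homogeneousComponent n a) else 0 := by
    intro i
    have h2 := hj i _ (homogeneousComponent_isHomogeneous i a)
    split_ifs with h
    · subst h
      rw [homogeneousComponent_of_mem h2, if_pos rfl]
    · rw [homogeneousComponent_of_mem h2, if_neg (by omega)]
  simp_rw [h1]
  rw [Finset.sum_ite_eq']
  split_ifs with h
  · rfl
  · rw [homogeneousComponent_eq_zero, map_zero]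
    simpa using h

theorem hom_relprime {x y : MvPolynomial σ K} (hx : x.IsHomogeneous 1) (hy : y.IsHomogeneous 1)
    (e1 e2 : σ → K) (h1 : eval e1 x = 1) (h2 : eval e2 x = 0) (h4 : eval e2 y = 1) :
    IsRelPrime x y := by
  have hx0 : x ≠ 0 := by rintro rfl; simp at h1
  have hy0 : y ≠ 0 := by rintro rfl; simp at h4
  rintro d ⟨g, hg⟩ ⟨h, hh⟩
  have hd0 : d ≠ 0 := by rintro rfl; simp [hx0] at hg
  have hg0 : g ≠ 0 := by rintro rfl; simp [hx0] at hg
  have hh0 : h ≠ 0 := by rintro rfl; simp [hy0] at hh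
  have t1 := totalDegree_mul_of_isDomain hd0 hg0
  have t2 := totalDegree_mul_of_isDomain hd0 hh0
  rw [← hg, hx.totalDegree hx0] at t1
  rw [← hh, hy.totalDegree hy0] at t2
  by_cases hd : d.totalDegree = 0
  · obtain ⟨c, rfl⟩ := hom_const_of_totalDegree hd
    rw [ne_eq, C_eq_zero] at hd0
    exact (IsUnit.mk0 _ hd0).map C
  · exfalso
    obtain ⟨c, rfl⟩ := hom_const_of_totalDegree (h := g) (by omega)
    obtain ⟨c', rfl⟩ := hom_const_of_totalDegree (h := h) (by omega)
    rw [ne_eq, C_eq_zero] at hg0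
    rw [hg] at h2
    rw [hh] at h4
    simp only [map_mul, eval_C, mul_eq_zero, hg0, or_false] at h2 h4
    simp [h2] at h4

theorem det_lemma {x y a b c d q1 q2 q : MvPolynomial σ K} (hx : x.IsHomogeneous 1) (hy : y.IsHomogeneous 1)
    (ha : a.IsHomogeneous 1) (hb : b.IsHomogeneous 1) (hc : c.IsHomogeneous 1) (hd : d.IsHomogeneous 1)
    (hq1 : q1.IsHomogeneous 2) (h10 : q1 ≠ 0) (hx0 : x ≠ 0)
    (hxy : IsRelPrime x y) (hqq : IsRelPrime q1 q2)
    (e1 : x * q = a * q1 + b * q2) (e2 : y * q = c * q1 + d * q2) :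
    ∃ s : K, x * d - y * b = C s * q1 ∧ y * a - x * c = C s * q2 ∧
      (s = 0 → q ∈ Submodule.span K {q1, q2}) := by
  obtain ⟨t, ht1, ht2⟩ := aux_relprime_syz hqq h10 (u := y * a - x * c) (v := x * d - y * b)
    (by linear_combination x * e2 - y * e1)
  obtain ⟨s, rfl⟩ := hom_dvd (n := 2) ((hx.mul hd).sub (hy.mul hb)) hq1 h10 ht1
  refine ⟨s, ht1, ht2, ?_⟩
  rintro rfl
  simp only [C_0, zero_mul] at ht1 ht2
  obtain ⟨t, hb', hd'⟩ := aux_relprime_syz hxy hx0 (u := d) (v := b) (by linear_combination ht1)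
  obtain ⟨t', ha', hc'⟩ := aux_relprime_syz hxy hx0 (u := c) (v := a) (by linear_combination -ht2)
  obtain ⟨β, rfl⟩ := hom_dvd hb hx hx0 hb'
  obtain ⟨α, rfl⟩ := hom_dvd ha hx hx0 ha'
  have : q = C α * q1 + C β * q2 := by
    apply mul_left_cancel₀ hx0
    rw [e1, ha', hb']; ring
  rw [Submodule.mem_span_pair]
  refine ⟨α, β, ?_⟩
  rw [this, C_mul', C_mul']

end HOM

section END

variable {K : Type u} [Field K] {N : ℕ}

theorem endgame (S : Set (MvPolynomial (Fin N) K)) (hS : ∀ f ∈ S, f.IsHomogeneous 2)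
    (f1 f2 : MvPolynomial (Fin N) K) (h1 : f1.IsHomogeneous 2) (h2 : f2.IsHomogeneous 2)
    (h10 : f1 ≠ 0) (h20 : f2 ≠ 0) (hrp : IsRelPrime f1 f2)
    (hf1 : f1 ∈ Ideal.span S) (hf2 : f2 ∈ Ideal.span S)
    (hk : ∀ q ∈ S, q ∉ Ideal.span {f1, f2} → ∃ x y : MvPolynomial (Fin N) K,
      x.IsHomogeneous 1 ∧ y.IsHomogeneous 1 ∧ x ≠ 0 ∧ IsRelPrime x y ∧
      ∀ q' ∈ S, x * q' ∈ Ideal.span {f1, f2} ∧ y * q' ∈ Ideal.span {f1, f2}) :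
    PdLE (MvPolynomial (Fin N) K) 2 (MvPolynomial (Fin N) K ⧸ Ideal.span S) := by
  have hQ : Ideal.span {f1, f2} ≤ Ideal.span S := by
    rw [Ideal.span_le]; rintro g (rfl | rfl) <;> assumption
  by_cases hc : ∀ q ∈ S, q ∈ Ideal.span {f1, f2}
  · exact pd_ci f1 f2 hrp h10 _ (le_antisymm (Ideal.span_le.2 hc) hQ)
  push Not at hc
  obtain ⟨q3, hq3S, hq3⟩ := hc
  obtain ⟨x, y, hx, hy, hx0, hxy, hkk⟩ := hk q3 hq3S hq3
  have key : ∀ q ∈ S, ∃ a b c d : MvPolynomial (Fin N) K, a.IsHomogeneous 1 ∧ b.IsHomogeneous 1 ∧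
      c.IsHomogeneous 1 ∧ d.IsHomogeneous 1 ∧ x * q = a * f1 + b * f2 ∧ y * q = c * f1 + d * f2 := by
    intro q hq
    obtain ⟨a, b, ha, hb, e⟩ := hom_mem_pair (m := 1) h1 h2 (hS q hq) (hkk q hq).1
    obtain ⟨c, d, hc, hd, e'⟩ := hom_mem_pair (m := 1) h1 h2 (hS q hq) (hkk q hq).2
    rw [homogeneousComponent_of_mem hx, if_pos rfl] at e
    rw [homogeneousComponent_of_mem hy, if_pos rfl] at e'
    exact ⟨a, b, c, d, ha, hb, hc, hd, e, e'⟩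
  have hspan : Submodule.span K {f1, f2} ≤ (Ideal.span {f1, f2}).restrictScalars K := by
    rw [Submodule.span_le]; exact fun g hg => Ideal.subset_span hg
  obtain ⟨a, b, c, d, ha, hb, hc, hd, e, e'⟩ := key q3 hq3S
  obtain ⟨s, d1, d2, hs⟩ := det_lemma hx hy ha hb hc hd h1 h10 hx0 hxy hrp e e'
  have hs0 : s ≠ 0 := fun h => hq3 (hspan (hs h))
  refine pd_hb f1 f2 q3 x y a b c d (C s) (C s⁻¹) hrp h10 h20 ?_ hx0 ?_ e e' d1 d2 _ ?_
  · rintro rfl; exact hq3 (zero_mem _)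
  · rw [← C_mul, mul_inv_cancel₀ hs0, C_1]
  apply le_antisymm
  · rw [Ideal.span_le]
    intro q4 hq4
    obtain ⟨a', b', c', d', ha', hb', hc', hd', e4, e4'⟩ := key q4 hq4
    obtain ⟨s', d1', d2', -⟩ := det_lemma hx hy ha' hb' hc' hd' h1 h10 hx0 hxy hrp e4 e4'
    have hl : ∀ {u v : MvPolynomial (Fin N) K}, u.IsHomogeneous 1 → v.IsHomogeneous 1 →
        (C s' * u - C s * v).IsHomogeneous 1 := by
      intro u v hu hv
      exact (hu.C_mul _).sub (hv.C_mul _)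
    obtain ⟨s'', d1'', d2'', h''⟩ := det_lemma (q := C s' * q3 - C s * q4) hx hy (hl ha ha') (hl hb hb') (hl hc hc') (hl hd hd')
      h1 h10 hx0 hxy hrp (by linear_combination C s' * e - C s * e4) (by linear_combination C s' * e' - C s * e4')
    have hs'' : s'' = 0 := by
      have : C s'' * f1 = 0 := by
        rw [← d1'']; linear_combination C s' * d1 - C s * d1'
      simpa [h10] using this
    have hm := h'' hs''
    have hle : Ideal.span {f1, f2} ≤ Ideal.span {f1, f2, q3} := by
      apply Ideal.span_mono; intro g hg; rcases hg with rfl | rfl <;> simp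
    have hm' : C s' * q3 - C s * q4 ∈ Ideal.span {f1, f2, q3} := hle (hspan hm)
    have h3 : q3 ∈ Ideal.span {f1, f2, q3} := Ideal.subset_span (by simp)
    have : q4 = C s⁻¹ * (C s' * q3 - (C s' * q3 - C s * q4)) := by
      rw [sub_sub_cancel, ← mul_assoc, ← C_mul, inv_mul_cancel₀ hs0, C_1, one_mul]
    rw [SetLike.mem_coe, this]
    exact Ideal.mul_mem_left _ _ (sub_mem (Ideal.mul_mem_left _ _ h3) hm')
  · rw [Ideal.span_le]; rintro g (rfl | rfl | rfl)
    · exact hf1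
    · exact hf2
    · exact Ideal.subset_span hq3S

end END

section HT

theorem ht_not_le_prime {R : Type*} [CommRing R] [IsNoetherianRing R] {I : Ideal R}
    (h : idealHeight I = 2) {π : R} (hπ : (Ideal.span {π}).IsPrime) : ¬ I ≤ Ideal.span {π} := by
  intro hle
  have h1 : idealHeight I ≤ Order.height (⟨Ideal.span {π}, hπ⟩ : PrimeSpectrum R) :=
    iInf₂_le (⟨Ideal.span {π}, hπ⟩ : PrimeSpectrum R) hle
  rw [h, ← PrimeSpectrum.height_eq_orderHeight] at h1
  have h2 := Ideal.height_le_one_of_isPrincipal_of_mem_minimalPrimes (Ideal.span {π}) (Ideal.span {π})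
    (by rw [Ideal.minimalPrimes_eq_subsingleton_self]; rfl)
  have h3 := h1.trans h2
  exact absurd h3 (by decide)

theorem ht_minimal {R : Type*} [CommRing R] [IsDomain R] [UniqueFactorizationMonoid R]
    {p : Ideal R} [hp : p.IsPrime]
    (h : idealHeight p = 2) {f1 f2 : R} (h10 : f1 ≠ 0) (hrp : IsRelPrime f1 f2)
    (h1 : f1 ∈ p) (h2 : f2 ∈ p) : p ∈ (Ideal.span {f1, f2}).minimalPrimes := by
  refine ⟨⟨hp, ?_⟩, ?_⟩
  · rw [Ideal.span_le]; rintro g (rfl | rfl) <;> assumption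
  rintro p' ⟨hp', hle⟩ hp'p
  by_contra hcon
  have hm1 : f1 ∈ p' := hle (Ideal.subset_span (by simp))
  have hm2 : f2 ∈ p' := hle (Ideal.subset_span (by simp))
  obtain ⟨s, hs, u, hu⟩ := UniqueFactorizationMonoid.exists_prime_factors f1 h10
  have hsp : s.prod ∈ p' := by
    have : s.prod * u ∈ p' := hu.symm ▸ hm1
    exact (hp'.mem_or_mem this).resolve_right (fun h => hp'.ne_top (Ideal.eq_top_of_isUnit_mem _ h u.isUnit))
  obtain ⟨π, hπs, hπ⟩ := (hp'.multiset_prod_mem_iff_exists_mem s).1 hsp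
  have hπp := hs π hπs
  have hπ1 : π ∣ f1 := (Multiset.dvd_prod hπs).trans ⟨u, hu.symm⟩
  have hP : (Ideal.span {π}).IsPrime := (Ideal.span_singleton_prime hπp.ne_zero).2 hπp
  have hlt2 : Ideal.span {π} < p' := by
    refine lt_of_le_of_ne ((Ideal.span_singleton_le_iff_mem _).2 hπ) ?_
    rintro rfl
    exact hπp.not_isUnit (hrp hπ1 (Ideal.mem_span_singleton.1 hm2))
  have hlt1 : (⊥ : Ideal R) < Ideal.span {π} := by
    rw [bot_lt_iff_ne_bot]; simpa using hπp.ne_zero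
  have hlt3 : p' < p := lt_of_le_not_ge hp'p hcon
  have e : Order.height (⟨p, hp⟩ : PrimeSpectrum R) ≤ 2 := by
    rw [← h]
    refine le_iInf₂ fun q hq => Order.height_mono ?_
    exact hq
  have a1 : Order.height (⟨⊥, Ideal.isPrime_bot⟩ : PrimeSpectrum R) + 1 ≤ Order.height (⟨Ideal.span {π}, hP⟩ : PrimeSpectrum R) :=
    Order.height_add_one_le hlt1
  have a2 : Order.height (⟨Ideal.span {π}, hP⟩ : PrimeSpectrum R) + 1 ≤ Order.height (⟨p', hp'⟩ : PrimeSpectrum R) :=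
    Order.height_add_one_le hlt2
  have a3 : Order.height (⟨p', hp'⟩ : PrimeSpectrum R) + 1 ≤ Order.height (⟨p, hp⟩ : PrimeSpectrum R) :=
    Order.height_add_one_le hlt3
  have : (3 : ℕ∞) ≤ 2 := by
    calc (3 : ℕ∞) = 0 + 1 + 1 + 1 := by norm_num
      _ ≤ Order.height (⟨⊥, Ideal.isPrime_bot⟩ : PrimeSpectrum R) + 1 + 1 + 1 := by gcongr; exact bot_le
      _ ≤ Order.height (⟨Ideal.span {π}, hP⟩ : PrimeSpectrum R) + 1 + 1 := by gcongr
      _ ≤ Order.height (⟨p', hp'⟩ : PrimeSpectrum R) + 1 := by gcongr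
      _ ≤ _ := a3
      _ ≤ 2 := e
  exact absurd this (by decide)

theorem ht_coprime {K : Type u} [Field K] [Infinite K] {N : ℕ} (S : Set (MvPolynomial (Fin N) K))
    (h : idealHeight (Ideal.span S) = 2) :
    ∃ q1 ∈ Submodule.span K S, ∃ q2 ∈ Submodule.span K S, q1 ≠ 0 ∧ q2 ≠ 0 ∧ IsRelPrime q1 q2 := by
  have hne : ∃ q1 ∈ S, q1 ≠ 0 := by
    by_contra hcon
    push Not at hcon
    have : Ideal.span S ≤ Ideal.span {0} := by
      rw [Ideal.span_le]; intro g hg; rw [hcon g hg]; exact zero_mem _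
    exact ht_not_le_prime h (by simpa using Ideal.isPrime_bot) this
  obtain ⟨q1, hq1S, hq10⟩ := hne
  have hq1V : q1 ∈ Submodule.span K S := Submodule.subset_span hq1S
  classical
  obtain ⟨s, hs, u, hu⟩ := UniqueFactorizationMonoid.exists_prime_factors q1 hq10
  let W : MvPolynomial (Fin N) K → Subspace K (Submodule.span K S) := fun π =>
    ((Ideal.span {π}).restrictScalars K).comap (Submodule.span K S).subtype
  have hW : ∀ π, Prime π → W π ≠ ⊤ := by
    intro π hπ htop
    apply ht_not_le_prime h ((Ideal.span_singleton_prime hπ.ne_zero).2 hπ)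
    rw [Ideal.span_le]
    intro g hg
    have : (⟨g, Submodule.subset_span hg⟩ : Submodule.span K S) ∈ W π := htop ▸ Submodule.mem_top
    exact this
  have hU : ⋃ i : s.toFinset, (W i.1 : Set (Submodule.span K S)) ≠ Set.univ := by
    intro hU
    obtain ⟨i, hi⟩ := Subspace.exists_eq_top_of_iUnion_eq_univ hU
    exact hW i.1 (hs _ (Multiset.mem_toFinset.1 i.2)) hi
  obtain ⟨q2, hq2⟩ := (Set.ne_univ_iff_exists_notMem _).1 hU
  simp only [Set.mem_iUnion, not_exists] at hq2
  have hno : ∀ π ∈ s, ¬ π ∣ (q2 : MvPolynomial (Fin N) K) := by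
    intro π hπ hd
    exact hq2 ⟨π, by simpa using hπ⟩ (Ideal.mem_span_singleton.2 hd)
  have hrp : IsRelPrime q1 (q2 : MvPolynomial (Fin N) K) := by
    rw [← hu]
    intro d hd1 hd2
    by_contra hdu
    have hd0 : d ≠ 0 := by rintro rfl; rw [zero_dvd_iff, hu] at hd1; exact hq10 hd1
    obtain ⟨τ, hτ, hτd⟩ := WfDvdMonoid.exists_irreducible_factor hdu hd0
    have hτp := hτ.prime
    have : τ ∣ s.prod := (hτp.dvd_or_dvd (hτd.trans hd1)).resolve_right
      (fun h => hτp.not_isUnit (isUnit_of_dvd_unit h u.isUnit))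
    obtain ⟨π, hπ, hd⟩ := hτp.exists_mem_multiset_dvd this
    have := (hτ.associated_of_dvd (hs π hπ).irreducible hd)
    exact hno π hπ (this.symm.dvd.trans (hτd.trans hd2))
  refine ⟨q1, hq1V, q2, q2.2, hq10, ?_, hrp⟩
  intro h0
  rw [h0, isRelPrime_zero_right] at hrp
  -- q1 unit impossible since I ≠ ⊤
  have : Ideal.span S = ⊤ := Ideal.eq_top_of_isUnit_mem _ (Ideal.subset_span hq1S) hrp
  have htop : idealHeight (Ideal.span S) = ⊤ := by
    rw [this, idealHeight]
    simp only [iInf_eq_top]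
    intro q hq
    exact absurd (top_le_iff.1 hq) q.isPrime.ne_top
  rw [htop] at h
  exact absurd h (by decide)

end HT

section NF

variable {K : Type u} [Field K] {σ : Type*}

theorem nf_h0 {n : ℕ} {a : MvPolynomial σ K} (ha : a.IsHomogeneous (n + 1)) : constantCoeff a = 0 := by
  rw [constantCoeff_eq]; exact ha.coeff_eq_zero (by simp)

theorem nf_lin {f : MvPolynomial σ K} (hf : f.IsHomogeneous 1) (e v : σ → K) (s : K) :
    eval (s • e + v) f = s * eval e f + eval v f := by
  rw [← mem_homogeneousSubmodule, homogeneousSubmodule_one_eq_span_X] at hf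
  induction hf using Submodule.span_induction with
  | mem x h => obtain ⟨i, rfl⟩ := h; simp
  | zero => simp
  | add x y _ _ hx hy => simp only [map_add, hx, hy]; ring
  | smul a x _ hx => simp only [smul_eval, hx]; ring

theorem nf_quad {f : MvPolynomial σ K} (hf : f.IsHomogeneous 2) (e : σ → K) :
    ∃ B : MvPolynomial σ K, B.IsHomogeneous 1 ∧ ∀ (v : σ → K) (s : K),
      eval (s • e + v) f = s ^ 2 * eval e f + s * eval v B + eval v f := by
  rw [← mem_homogeneousSubmodule, ← homogeneousSubmodule_one_pow, pow_two] at hf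
  refine Submodule.mul_induction_on hf ?_ ?_
  · intro l hl m hm
    refine ⟨C (eval e l) * m + C (eval e m) * l, (hm.C_mul _).add (hl.C_mul _), ?_⟩
    intro v s
    simp only [map_mul, map_add, eval_C, nf_lin hl, nf_lin hm]; ring
  · intro x y hx hy
    obtain ⟨B, hB, h⟩ := hx
    obtain ⟨B', hB', h'⟩ := hy
    refine ⟨B + B', hB.add hB', ?_⟩
    intro v s
    simp only [map_add, h, h']; ring

theorem nf_relprime {R : Type*} [CommRing R] {q1 q2 f1 f2 : R} (h : IsRelPrime q1 q2)
    (h1 : ∃ u v, q1 = u * f1 + v * f2) (h2 : ∃ u v, q2 = u * f1 + v * f2) : IsRelPrime f1 f2 := by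
  obtain ⟨u, v, rfl⟩ := h1
  obtain ⟨u', v', rfl⟩ := h2
  intro d hd1 hd2
  exact h (dvd_add (hd1.mul_left _) (hd2.mul_left _)) (dvd_add (hd1.mul_left _) (hd2.mul_left _))

theorem nf_ne [Infinite K] {f : MvPolynomial σ K} (hf : f ≠ 0) : ∃ v, eval v f ≠ 0 := by
  by_contra h
  push Not at h
  exact hf (MvPolynomial.funext (fun v => by simpa using h v))

theorem nf_exists [Infinite K] {q1 q2 : MvPolynomial σ K} (hq1 : q1.IsHomogeneous 2)
    (hq2 : q2.IsHomogeneous 2) (h10 : q1 ≠ 0) (h20 : q2 ≠ 0) (hrp : IsRelPrime q1 q2) :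
    ∃ (e1 e2 : σ → K) (f1 f2 : MvPolynomial σ K), f1 ∈ Submodule.span K {q1, q2} ∧
      f2 ∈ Submodule.span K {q1, q2} ∧ f1.IsHomogeneous 2 ∧ f2.IsHomogeneous 2 ∧ IsRelPrime f1 f2 ∧
      eval e1 f1 = 1 ∧ eval e2 f1 = 0 ∧ eval e1 f2 = 0 ∧ eval e2 f2 = 1 ∧
      ∀ s : K, eval (s • e1 + e2) f1 = 0 → eval (s • e1 + e2) f2 = 0 → False := by
  obtain ⟨e1, he1⟩ := nf_ne h10
  set k := eval e1 q1 with hk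
  let f1 := C k⁻¹ * q1
  let f2 := q2 - C (eval e1 q2) * f1
  have hf1 : f1.IsHomogeneous 2 := hq1.C_mul _
  have hf2 : f2.IsHomogeneous 2 := hq2.sub (hf1.C_mul _)
  have hq1f : q1 = C k * f1 := by
    simp only [f1]; rw [← mul_assoc, ← C_mul, mul_inv_cancel₀ he1, C_1, one_mul]
  have hrp' : IsRelPrime f1 f2 := by
    refine nf_relprime hrp ⟨C k, 0, by rw [hq1f]; ring⟩ ⟨C (eval e1 q2), 1, by simp only [f2]; ring⟩
  have e11 : eval e1 f1 = 1 := by simp [f1, ← hk, he1]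
  have e12 : eval e1 f2 = 0 := by simp [f2, e11]
  have hf10 : f1 ≠ 0 := by intro h; rw [h] at e11; simp at e11
  have hf20 : f2 ≠ 0 := by
    intro h
    rw [h, isRelPrime_zero_right] at hrp'
    have h3 := hf1.totalDegree hf10
    rw [MvPolynomial.isUnit_iff_eq_C_of_isReduced] at hrp'
    obtain ⟨r, -, hr⟩ := hrp'
    rw [hr, totalDegree_C] at h3
    omega
  obtain ⟨b, hb, hb'⟩ := nf_quad hf1 e1
  obtain ⟨B, hB, hB'⟩ := nf_quad hf2 e1
  simp only [e11, e12] at hb' hB'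
  have hD : f2 ^ 2 - b * B * f2 + f1 * B ^ 2 ≠ 0 := by
    intro hD
    have hBB : B = 0 := by
      have hdvd : f2 ∣ f1 * B ^ 2 := ⟨b * B - f2, by linear_combination hD⟩
      obtain ⟨g, hg⟩ := hrp'.symm.dvd_of_dvd_mul_left hdvd
      obtain ⟨κ, rfl⟩ := hom_dvd (n := 2) (hB.pow 2) hf2 hf20 (hg.trans (mul_comm _ _))
      have hBe : eval e1 B = 0 := by
        have h1 := hB' e1 (-1)
        have h2 : (-1 : K) • e1 + e1 = 0 := by simp
        have h3 : eval (0 : σ → K) f2 = 0 := by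
          rw [eval_zero, constantCoeff_eq]
          exact hf2.coeff_eq_zero (by simp)
        rw [h2, e12] at h1
        rw [h3] at h1
        linear_combination h1
      by_contra hB0
      obtain ⟨v, hv⟩ := nf_ne hB0
      have h1 := congrArg (eval ((1:K) • e1 + v)) hg
      have h2 := congrArg (eval v) hg
      simp only [map_pow, map_mul, eval_C, nf_lin hB, hBe, hB'] at h1 h2
      have h3 : κ * eval v B = 0 := by linear_combination h2 - h1
      have hκ := (mul_eq_zero.1 h3).resolve_right hv
      rw [hκ] at h2
      simp [hv] at h2
    rw [hBB] at hD
    simp [hf20] at hD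
  obtain ⟨e2, he2⟩ := nf_ne (mul_ne_zero hD hf20)
  rw [map_mul] at he2
  have hDe := left_ne_zero_of_mul he2
  have h2e := right_ne_zero_of_mul he2
  have hno : ∀ s : K, eval (s • e1 + e2) f1 = 0 → eval (s • e1 + e2) f2 = 0 → False := by
    intro s h1 h2
    rw [hb'] at h1
    rw [hB'] at h2
    apply hDe
    simp only [map_add, map_sub, map_mul, map_pow]
    linear_combination (eval e2 B)^2 * h1 - (s * eval e2 B + eval e2 b * eval e2 B - eval e2 f2) * h2
  set l := eval e2 f2 with hl
  have m1 : f1 ∈ Submodule.span K {q1, q2} := by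
    simp only [f1]; rw [C_mul']; exact Submodule.smul_mem _ _ (Submodule.subset_span (by simp))
  have m2 : f2 ∈ Submodule.span K {q1, q2} := by
    simp only [f2]; rw [C_mul']
    exact sub_mem (Submodule.subset_span (by simp)) (Submodule.smul_mem _ _ m1)
  refine ⟨e1, e2, f1 - C (eval e2 f1 * l⁻¹) * f2, C l⁻¹ * f2, ?_, ?_, ?_, ?_, ?_, ?_, ?_, ?_, ?_, ?_⟩
  · rw [C_mul']; exact sub_mem m1 (Submodule.smul_mem _ _ m2)
  · rw [C_mul']; exact Submodule.smul_mem _ _ m2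
  · exact hf1.sub (hf2.C_mul _)
  · exact hf2.C_mul _
  · have hh : f2 = C l * (C l⁻¹ * f2) := by
      rw [← mul_assoc, ← C_mul, mul_inv_cancel₀ h2e, C_1, one_mul]
    refine nf_relprime hrp' ⟨1, C (eval e2 f1), ?_⟩ ⟨0, C l, by rw [← hh]; ring⟩
    rw [C_mul]; ring
  · simp [e11, e12]
  · simp [← hl, h2e]
  · simp [e12]
  · simp [← hl, h2e]
  · intro s h1 h2
    have h2' : eval (s • e1 + e2) f2 = 0 := by
      rw [map_mul, eval_C, mul_eq_zero] at h2
      exact h2.resolve_left (inv_ne_zero h2e)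
    refine hno s ?_ h2'
    simpa [h2'] using h1

end NF

section COORD

theorem coord_basis {K V : Type*} [Field K] [AddCommGroup V] [Module K V] [Module.Finite K V] (e1 e2 : V)
    (h : LinearIndependent K ![e1, e2]) :
    ∃ (d : ℕ) (ε : Module.Basis (Option (Option (Fin d))) K V), ε none = e1 ∧ ε (some none) = e2 := by
  let b := Module.Basis.sumExtend h
  have hb : ∀ i, b (Sum.inl i) = ![e1, e2] i := by
    intro i
    simp [b, Module.Basis.sumExtend]
    rfl
  have hfin : Finite (Fin 2 ⊕ Module.Basis.sumExtendIndex h) := Module.Finite.finite_basis b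
  have hfin2 : Finite (Module.Basis.sumExtendIndex h) := Finite.sum_right (Fin 2)
  obtain ⟨d, ⟨eq⟩⟩ := Finite.exists_equiv_fin (Module.Basis.sumExtendIndex h)
  let E : Fin 2 ⊕ Module.Basis.sumExtendIndex h ≃ Option (Option (Fin d)) :=
    { toFun := Sum.elim ![none, some none] (fun i => some (some (eq i)))
      invFun := fun o => match o with
        | none => Sum.inl 0
        | some none => Sum.inl 1
        | some (some i) => Sum.inr (eq.symm i)
      left_inv := by
        rintro (i | i)
        · fin_cases i <;> rfl
        · simp
      right_inv := by
        rintro (_ | _ | i)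
        · rfl
        · rfl
        · simp }
  refine ⟨d, b.reindex E, ?_, ?_⟩
  · rw [Module.Basis.reindex_apply]; exact hb 0
  · rw [Module.Basis.reindex_apply]; exact hb 1

theorem coord_exists {K : Type u} [Field K] {N : ℕ} (e1 e2 : Fin N → K)
    (h : LinearIndependent K ![e1, e2]) :
    ∃ (d : ℕ) (y1 y2 : MvPolynomial (Fin N) K) (j : MvPolynomial (Fin d) K →ₐ[K] MvPolynomial (Fin N) K)
      (θ : MvPolynomial (Fin N) K ≃ₐ[K] Polynomial (Polynomial (MvPolynomial (Fin d) K))),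
      y1.IsHomogeneous 1 ∧ y2.IsHomogeneous 1 ∧ (∀ n a, a.IsHomogeneous n → (j a).IsHomogeneous n) ∧
      θ y1 = Polynomial.X ∧ θ y2 = Polynomial.C Polynomial.X ∧
      (∀ a, θ (j a) = Polynomial.C (Polynomial.C a)) ∧
      (∀ i, ∃ (α β : K) (l : MvPolynomial (Fin d) K), l.IsHomogeneous 1 ∧
        X i = C α * y1 + C β * y2 + j l) ∧
      eval e1 y1 = 1 ∧ eval e2 y1 = 0 ∧ eval e1 y2 = 0 ∧ eval e2 y2 = 1 ∧
      ∀ (s t : K) a, eval (s • e1 + t • e2) (j a) = constantCoeff a := by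
  obtain ⟨d, ε, hε1, hε2⟩ := coord_basis e1 e2 h
  let L : Option (Option (Fin d)) → MvPolynomial (Fin N) K :=
    fun k => ∑ i, C (ε.repr (Pi.single i 1) k) * X i
  let M : Fin N → MvPolynomial (Option (Option (Fin d))) K := fun i => ∑ k, C (ε k i) * X k
  have hL : ∀ k, (L k).IsHomogeneous 1 := by
    intro k
    exact IsHomogeneous.sum _ _ _ fun i _ => (isHomogeneous_X K i).C_mul _
  have evL : ∀ v k, eval v (L k) = ε.repr v k := by
    intro v k
    have : v = ∑ i, v i • (Pi.single i 1 : Fin N → K) := by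
      ext i; simp [Finset.sum_apply, Pi.single_apply]
    conv_rhs => rw [this]
    simp [L, mul_comm]
  have evM : ∀ v i, eval v (M i) = ∑ k, ε k i * v k := by
    intro v i
    simp [M]
  have hLM : ∀ i, aeval L (M i) = X i := by
    intro i
    simp only [M, map_sum, map_mul, aeval_X, algHom_C, algebraMap_eq, L]
    simp_rw [Finset.mul_sum, ← mul_assoc, ← C_mul]
    rw [Finset.sum_comm]
    simp_rw [← Finset.sum_mul, ← map_sum]
    have : ∀ i', ∑ k, ε k i * ε.repr (Pi.single i' 1) k = (Pi.single i' (1:K) : Fin N → K) i := by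
      intro i'
      conv_rhs => rw [← ε.sum_repr (Pi.single i' 1)]
      simp only [Finset.sum_apply, Pi.smul_apply, smul_eq_mul, mul_comm]
    simp_rw [this, Pi.single_apply]
    simp
  have hML : ∀ k, aeval M (L k) = X k := by
    intro k
    simp only [L, map_sum, map_mul, aeval_X, algHom_C, algebraMap_eq, M]
    simp_rw [Finset.mul_sum, ← mul_assoc, ← C_mul]
    rw [Finset.sum_comm]
    simp_rw [← Finset.sum_mul, ← map_sum]
    have : ∀ l, ∑ i, ε.repr (Pi.single i 1) k * ε l i = if l = k then 1 else 0 := by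
      intro l
      have := evL (ε l) k
      simp only [L, map_sum, map_mul, eval_C, eval_X] at this
      rw [this, ε.repr_self, Finsupp.single_apply]
    simp_rw [this]
    simp
  let ψ : MvPolynomial (Fin N) K ≃ₐ[K] MvPolynomial (Option (Option (Fin d))) K :=
    AlgEquiv.ofAlgHom (aeval M) (aeval L)
      (by ext k : 1; simp only [AlgHom.comp_apply, aeval_X, AlgHom.id_apply]; exact hML k)
      (by ext k : 1; simp only [AlgHom.comp_apply, aeval_X, AlgHom.id_apply]; exact hLM k)
  have hψ : ∀ k, ψ (L k) = X k := hML
  let θ := (ψ.trans (optionEquivLeft K _)).trans (Polynomial.mapAlgEquiv (optionEquivLeft K (Fin d)))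
  have hθ : ∀ f, θ f = Polynomial.map (optionEquivLeft K (Fin d) : _ →+* _) (optionEquivLeft K _ (ψ f)) := fun f => rfl
  refine ⟨d, L none, L (some none), aeval (fun i => L (some (some i))), θ, hL _, hL _, ?_, ?_, ?_, ?_, ?_, ?_, ?_, ?_, ?_, ?_⟩
  · intro n a ha
    have := ha.aeval (fun i => L (some (some i))) (fun i => hL _)
    simpa using this
  · rw [hθ, hψ]; simp
  · rw [hθ, hψ]; simp
  · intro a
    have : (θ : _ →ₐ[K] _).comp (aeval (fun i => L (some (some i)))) =
      IsScalarTower.toAlgHom K (MvPolynomial (Fin d) K) (Polynomial (Polynomial (MvPolynomial (Fin d) K))) := by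
      ext i : 1
      simp only [AlgHom.comp_apply, aeval_X]
      change θ _ = Polynomial.C (Polynomial.C _)
      rw [hθ, hψ]; simp
    exact DFunLike.congr_fun this a
  · intro i
    refine ⟨ε none i, ε (some none) i, ∑ k, C (ε (some (some k)) i) * X k, ?_, ?_⟩
    · exact IsHomogeneous.sum _ _ _ fun i _ => (isHomogeneous_X K i).C_mul _
    · rw [← hLM i]
      simp [M, Fintype.sum_option, add_assoc, algHom_C]
  · rw [evL, ← hε1]; simp
  · rw [evL, ← hε2]; simp
  · rw [evL, ← hε1]; simp
  · rw [evL, ← hε2]; simp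
  · intro s t a
    have : ((aeval (s • e1 + t • e2) : _ →ₐ[K] K).comp (aeval (fun i => L (some (some i))))) = aeval 0 := by
      ext i
      simp only [AlgHom.comp_apply, aeval_X]
      rw [aeval_eq_eval]
      change eval _ _ = _
      rw [evL, ← hε1, ← hε2]; simp
    have h2 := DFunLike.congr_fun this a
    rw [← eval_zero]
    exact h2

end COORD

section GEN

open Polynomial in
theorem tf_apply {A : Type*} [CommRing A] [IsDomain A] (b a1 a2 a3 β c1 c2 c3 κ : A)
    (hκ : κ * (1 - b * β) = 1) (f1 f2 : A[X][X])
    (hf1 : f1 = Polynomial.X ^ 2 + Polynomial.C (Polynomial.C b * Polynomial.X) * Polynomial.X + Polynomial.C (Polynomial.C a1) * Polynomial.X + Polynomial.C (Polynomial.C a2) * Polynomial.C Polynomial.X + Polynomial.C (Polynomial.C a3))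
    (hf2 : f2 = Polynomial.C Polynomial.X ^ 2 + Polynomial.C (Polynomial.C β * Polynomial.X) * Polynomial.X + Polynomial.C (Polynomial.C c1) * Polynomial.X + Polynomial.C (Polynomial.C c2) * Polynomial.C Polynomial.X + Polynomial.C (Polynomial.C c3))
    (a : A) (ha : a ≠ 0)
    (g : A[X][X]) (hg : Polynomial.C (Polynomial.C a) * g ∈ Ideal.span {f1, f2}) : g ∈ Ideal.span {f1, f2} := by
  set P : A[X] := Polynomial.C b * Polynomial.X + Polynomial.C a1 with hP
  set Q : A[X] := Polynomial.C a2 * Polynomial.X + Polynomial.C a3 with hQ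
  set S : A[X] := Polynomial.C β * Polynomial.X + Polynomial.C c1 with hS
  set U : A[X] := Polynomial.X ^ 2 + Polynomial.C c2 * Polynomial.X + Polynomial.C c3 with hU
  have e1 : f1 = Polynomial.X ^ 2 + Polynomial.C P * Polynomial.X + Polynomial.C Q := by
    rw [hf1, hP, hQ]; simp only [Polynomial.C_add, Polynomial.C_mul, Polynomial.C_pow]; ring
  have e2 : f2 = Polynomial.C S * Polynomial.X + Polynomial.C U := by
    rw [hf2, hS, hU]; simp only [Polynomial.C_add, Polynomial.C_mul, Polynomial.C_pow]; ring
  refine tf_main f1 f2 (Polynomial.C (Polynomial.C κ) * Polynomial.C S ^ 2) (- (Polynomial.C (Polynomial.C κ) * (Polynomial.C S * Polynomial.X + Polynomial.C P * Polynomial.C S - Polynomial.C U)))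
    (Polynomial.C κ * (S ^ 2 * Q - P * S * U + U ^ 2)) ?_ ?_ ?_ a ha g hg
  · rw [e1]; monicity!
  · have hκ' : (Polynomial.C κ : A[X]) * (1 - Polynomial.C b * Polynomial.C β) = 1 := by rw [← Polynomial.C_1, ← Polynomial.C_mul, ← Polynomial.C_sub, ← Polynomial.C_mul, hκ]
    have : ∃ r3 r2 r1 r0 : A, (Polynomial.C κ * (S ^ 2 * Q - P * S * U + U ^ 2)) =
        Polynomial.X ^ 4 + Polynomial.C r3 * Polynomial.X ^ 3 + Polynomial.C r2 * Polynomial.X ^ 2 + Polynomial.C r1 * Polynomial.X + Polynomial.C r0 := by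
      refine ⟨κ * (β ^ 2 * a2 - (b * c1 + β * a1) - b * β * c2 + 2 * c2),
        κ * (β^2 * a3 + 2 * β * c1 * a2 - (a1 * c1) - (b * c1 + β * a1) * c2 - b * β * c3 + c2 ^ 2 + 2 * c3),
        κ * (c1 ^ 2 * a2 + 2 * β * c1 * a3 - a1 * c1 * c2 - (b * c1 + β * a1) * c3 + 2 * c2 * c3),
        κ * (c1 ^ 2 * a3 - a1 * c1 * c3 + c3 ^ 2), ?_⟩
      rw [hP, hQ, hS, hU]
      simp only [Polynomial.C_add, Polynomial.C_mul, Polynomial.C_pow, Polynomial.C_sub, map_ofNat]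
      linear_combination Polynomial.X ^ 4 * hκ'
    obtain ⟨r3, r2, r1, r0, h⟩ := this
    rw [h]; monicity!
  · rw [e1, e2]; simp only [Polynomial.C_add, Polynomial.C_mul, Polynomial.C_pow, Polynomial.C_sub]; ring

variable {K : Type u} [Field K] {N d : ℕ} {y1 y2 : MvPolynomial (Fin N) K}
  {j : MvPolynomial (Fin d) K →ₐ[K] MvPolynomial (Fin N) K}

theorem gen_lin (hX : ∀ i, ∃ (α β : K) (l : MvPolynomial (Fin d) K), l.IsHomogeneous 1 ∧
        X i = C α * y1 + C β * y2 + j l) {f : MvPolynomial (Fin N) K} (hf : f.IsHomogeneous 1) :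
    ∃ (α β : K) (l : MvPolynomial (Fin d) K), l.IsHomogeneous 1 ∧ f = C α * y1 + C β * y2 + j l := by
  rw [← mem_homogeneousSubmodule, homogeneousSubmodule_one_eq_span_X] at hf
  induction hf using Submodule.span_induction with
  | mem x h => obtain ⟨i, rfl⟩ := h; exact hX i
  | zero => exact ⟨0, 0, 0, isHomogeneous_zero _ _ _, by simp⟩
  | add x y _ _ hx hy =>
    obtain ⟨α, β, l, hl, h⟩ := hx
    obtain ⟨α', β', l', hl', h'⟩ := hy
    exact ⟨α + α', β + β', l + l', hl.add hl', by rw [h, h']; simp only [C_add, map_add]; ring⟩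
  | smul a x _ hx =>
    obtain ⟨α, β, l, hl, h⟩ := hx
    refine ⟨a * α, a * β, C a * l, hl.C_mul _, ?_⟩
    rw [h, ← C_mul']
    simp only [C_mul, map_mul, algHom_C, algebraMap_eq]; ring

theorem gen_quad (hX : ∀ i, ∃ (α β : K) (l : MvPolynomial (Fin d) K), l.IsHomogeneous 1 ∧
        X i = C α * y1 + C β * y2 + j l) {f : MvPolynomial (Fin N) K} (hf : f.IsHomogeneous 2) :
    ∃ (k1 k2 k3 : K) (a1 a2 a3 : MvPolynomial (Fin d) K), a1.IsHomogeneous 1 ∧ a2.IsHomogeneous 1 ∧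
      a3.IsHomogeneous 2 ∧ f = C k1 * y1 ^ 2 + C k2 * y1 * y2 + C k3 * y2 ^ 2 + j a1 * y1 + j a2 * y2 + j a3 := by
  rw [← mem_homogeneousSubmodule, ← homogeneousSubmodule_one_pow, pow_two] at hf
  refine Submodule.mul_induction_on hf ?_ ?_
  · intro m hm m' hm'
    obtain ⟨α, β, l, hl, h⟩ := gen_lin hX hm
    obtain ⟨α', β', l', hl', h'⟩ := gen_lin hX hm'
    refine ⟨α * α', α * β' + β * α', β * β', C α * l' + C α' * l, C β * l' + C β' * l, l * l',
      (hl'.C_mul _).add (hl.C_mul _), (hl'.C_mul _).add (hl.C_mul _), hl.mul hl', ?_⟩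
    rw [h, h']; simp only [C_add, C_mul, map_mul, map_add, algHom_C, algebraMap_eq]; ring
  · rintro x y ⟨k1, k2, k3, a1, a2, a3, h1, h2, h3, h⟩ ⟨k1', k2', k3', a1', a2', a3', h1', h2', h3', h'⟩
    refine ⟨k1 + k1', k2 + k2', k3 + k3', a1 + a1', a2 + a2', a3 + a3', h1.add h1', h2.add h2', h3.add h3', ?_⟩
    rw [h, h']; simp only [C_add, map_add]; ring

theorem gen_norm {e1 e2 : Fin N → K} (hX : ∀ i, ∃ (α β : K) (l : MvPolynomial (Fin d) K), l.IsHomogeneous 1 ∧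
        X i = C α * y1 + C β * y2 + j l)
    (hy1 : y1.IsHomogeneous 1) (hy2 : y2.IsHomogeneous 1)
    (e11 : eval e1 y1 = 1) (e21 : eval e2 y1 = 0) (e12 : eval e1 y2 = 0) (e22 : eval e2 y2 = 1)
    (hev : ∀ (s t : K) a, eval (s • e1 + t • e2) (j a) = constantCoeff a)
    {f : MvPolynomial (Fin N) K} (hf : f.IsHomogeneous 2) :
    ∃ (k : K) (a1 a2 a3 : MvPolynomial (Fin d) K), a1.IsHomogeneous 1 ∧ a2.IsHomogeneous 1 ∧
      a3.IsHomogeneous 2 ∧ f = C (eval e1 f) * y1 ^ 2 + C k * y1 * y2 + C (eval e2 f) * y2 ^ 2 + j a1 * y1 + j a2 * y2 + j a3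
      ∧ ∀ s, eval (s • e1 + e2) f = s ^ 2 * eval e1 f + s * k + eval e2 f := by
  obtain ⟨k1, k2, k3, a1, a2, a3, h1, h2, h3, h⟩ := gen_quad hX hf
  have hee : ∀ s t, eval (s • e1 + t • e2) f = k1 * s ^ 2 + k2 * s * t + k3 * t ^ 2 := by
    intro s t
    have hy1' : eval (s • e1 + t • e2) y1 = s := by
      rw [nf_lin hy1]; have := nf_lin hy1 e2 0 t; rw [add_zero] at this
      rw [this, e11, e21, eval_zero, nf_h0 hy1]; ring
    have hy2' : eval (s • e1 + t • e2) y2 = t := by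
      rw [nf_lin hy2]; have := nf_lin hy2 e2 0 t; rw [add_zero] at this
      rw [this, e12, e22, eval_zero, nf_h0 hy2]; ring
    rw [h]
    simp only [map_add, map_mul, map_pow, eval_C, hy1', hy2', hev, nf_h0 h1, nf_h0 h2, nf_h0 h3]; ring
  have hk1 : eval e1 f = k1 := by have := hee 1 0; simpa using this
  have hk3 : eval e2 f = k3 := by have := hee 0 1; simpa using this
  refine ⟨k2, a1, a2, a3, h1, h2, h3, by rw [hk1, hk3, ← h], ?_⟩
  intro s
  have := hee s 1
  rw [one_smul] at this
  rw [this, hk1, hk3]; ring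

end GEN

section GENP

variable {K : Type u} [Field K] {N d : ℕ}

/-- `t` has bounded normal form modulo `Q`. -/
def GenP (y1 y2 : MvPolynomial (Fin N) K)
    (j : MvPolynomial (Fin d) K →ₐ[K] MvPolynomial (Fin N) K) (Q : Ideal (MvPolynomial (Fin N) K))
    (n : ℕ) (t : MvPolynomial (Fin N) K) : Prop :=
  ∃ u0 u1 u2 u3 : MvPolynomial (Fin d) K, u0.totalDegree ≤ n + 2 ∧ u1.totalDegree ≤ n + 1 ∧
    u2.totalDegree ≤ n + 1 ∧ u3.totalDegree ≤ n ∧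
    t - (j u0 + j u1 * y1 + j u2 * y2 + j u3 * (y1 * y2)) ∈ Q

variable {y1 y2 : MvPolynomial (Fin N) K}
  {j : MvPolynomial (Fin d) K →ₐ[K] MvPolynomial (Fin N) K} {Q : Ideal (MvPolynomial (Fin N) K)}

theorem GenP.congr {n : ℕ} {s t : MvPolynomial (Fin N) K} (h : GenP y1 y2 j Q n s) (hst : t - s ∈ Q) :
    GenP y1 y2 j Q n t := by
  obtain ⟨u0, u1, u2, u3, h0, h1, h2, h3, h⟩ := h
  refine ⟨u0, u1, u2, u3, h0, h1, h2, h3, ?_⟩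
  convert add_mem hst h using 1; ring

theorem GenP.mono {n m : ℕ} (hnm : n ≤ m) {s : MvPolynomial (Fin N) K} (h : GenP y1 y2 j Q n s) :
    GenP y1 y2 j Q m s := by
  obtain ⟨u0, u1, u2, u3, h0, h1, h2, h3, h⟩ := h
  exact ⟨u0, u1, u2, u3, by omega, by omega, by omega, by omega, h⟩

theorem GenP.add {n : ℕ} {s t : MvPolynomial (Fin N) K} (h : GenP y1 y2 j Q n s)
    (h' : GenP y1 y2 j Q n t) : GenP y1 y2 j Q n (s + t) := by
  obtain ⟨u0, u1, u2, u3, h0, h1, h2, h3, h⟩ := h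
  obtain ⟨v0, v1, v2, v3, g0, g1, g2, g3, g⟩ := h'
  refine ⟨u0 + v0, u1 + v1, u2 + v2, u3 + v3, ?_, ?_, ?_, ?_, ?_⟩
  · exact (totalDegree_add _ _).trans (max_le h0 g0)
  · exact (totalDegree_add _ _).trans (max_le h1 g1)
  · exact (totalDegree_add _ _).trans (max_le h2 g2)
  · exact (totalDegree_add _ _).trans (max_le h3 g3)
  · convert add_mem h g using 1; simp only [map_add]; ring

theorem GenP.mulj {n m k : ℕ} {a : MvPolynomial (Fin d) K} (ha : a.totalDegree ≤ k) {s : MvPolynomial (Fin N) K}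
    (h : GenP y1 y2 j Q n s) (hm : k + n ≤ m) : GenP y1 y2 j Q m (j a * s) := by
  obtain ⟨u0, u1, u2, u3, h0, h1, h2, h3, h⟩ := h
  refine ⟨a * u0, a * u1, a * u2, a * u3, ?_, ?_, ?_, ?_, ?_⟩
  · exact (totalDegree_mul _ _).trans (by omega)
  · exact (totalDegree_mul _ _).trans (by omega)
  · exact (totalDegree_mul _ _).trans (by omega)
  · exact (totalDegree_mul _ _).trans (by omega)
  · convert Q.mul_mem_left (j a) h using 1; simp only [map_mul]; ring

theorem GenP.jj {n : ℕ} {a : MvPolynomial (Fin d) K} (ha : a.totalDegree ≤ n + 2) :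
    GenP y1 y2 j Q n (j a) := ⟨a, 0, 0, 0, ha, by simp, by simp, by simp, by simp⟩

theorem GenP.jy1 {n : ℕ} {a : MvPolynomial (Fin d) K} (ha : a.totalDegree ≤ n + 1) :
    GenP y1 y2 j Q n (j a * y1) := ⟨0, a, 0, 0, by simp, ha, by simp, by simp, by simp⟩

theorem GenP.jy2 {n : ℕ} {a : MvPolynomial (Fin d) K} (ha : a.totalDegree ≤ n + 1) :
    GenP y1 y2 j Q n (j a * y2) := ⟨0, 0, a, 0, by simp, by simp, ha, by simp, by simp⟩

theorem GenP.jy12 {n : ℕ} {a : MvPolynomial (Fin d) K} (ha : a.totalDegree ≤ n) :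
    GenP y1 y2 j Q n (j a * (y1 * y2)) := ⟨0, 0, 0, a, by simp, by simp, by simp, ha, by simp⟩

theorem genP_sq {b : K} {a1 a2 a3 : MvPolynomial (Fin d) K} (h1 : a1.totalDegree ≤ 1)
    (h2 : a2.totalDegree ≤ 1) (h3 : a3.totalDegree ≤ 2) {y : MvPolynomial (Fin N) K}
    (hf : y ^ 2 + C b * y1 * y2 + j a1 * y1 + j a2 * y2 + j a3 ∈ Q) : GenP y1 y2 j Q 0 (y ^ 2) := by
  refine ⟨-a3, -a1, -a2, -C b, ?_, ?_, ?_, ?_, ?_⟩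
  · rwa [totalDegree_neg]
  · rwa [totalDegree_neg]
  · rwa [totalDegree_neg]
  · rw [totalDegree_neg, totalDegree_C]
  · convert hf using 1; simp only [map_neg, algHom_C, algebraMap_eq]; ring

/-- multiplication by `y1`; symmetric use for `y2` -/
theorem genP_sqmul {b β κ : K} (hκ : κ * (1 - b * β) = 1) {a1 a2 a3 c1 c2 c3 : MvPolynomial (Fin d) K}
    (h1 : a1.totalDegree ≤ 1) (h2 : a2.totalDegree ≤ 1) (h3 : a3.totalDegree ≤ 2)
    (g1 : c1.totalDegree ≤ 1) (g2 : c2.totalDegree ≤ 1) (g3 : c3.totalDegree ≤ 2)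
    (hf : y1 ^ 2 + C b * y1 * y2 + j a1 * y1 + j a2 * y2 + j a3 ∈ Q)
    (hg : y2 ^ 2 + C β * y1 * y2 + j c1 * y1 + j c2 * y2 + j c3 ∈ Q) :
    GenP y1 y2 j Q 1 (y1 ^ 2 * y2) ∧ GenP y1 y2 j Q 1 (y1 * y2 ^ 2) := by
  have s1 := genP_sq h1 h2 h3 hf
  have s2 := genP_sq g1 g2 g3 hg
  have hC : ∀ (r : K) {k} {a : MvPolynomial (Fin d) K}, a.totalDegree ≤ k → (C r * a).totalDegree ≤ k := by
    intro r k a ha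
    refine (totalDegree_mul _ _).trans ?_
    rw [totalDegree_C]; omega
  have hκ' : (C κ : MvPolynomial (Fin N) K) * (1 - C b * C β) = 1 := by
    rw [← C_1, ← C_mul, ← C_sub, ← C_mul, hκ]
  constructor
  · have e : GenP y1 y2 j Q 1 (j (C (κ * b) * c1) * y1 ^ 2 + j (C (κ * b) * c2) * (y1 * y2) + j (C (κ * b) * c3) * y1
        + j (C (-κ) * a1) * (y1 * y2) + j (C (-κ) * a2) * y2 ^ 2 + j (C (-κ) * a3) * y2) :=
      (((((s1.mulj (hC _ g1) le_rfl).add (GenP.jy12 (hC _ g2))).add (GenP.jy1 (hC _ g3))).add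
        (GenP.jy12 (hC _ h1))).add (s2.mulj (hC _ h2) le_rfl)).add (GenP.jy2 (hC _ h3))
    refine e.congr ?_
    convert add_mem (Q.mul_mem_left (C κ * y2) hf) (Q.mul_mem_left (- (C κ * C b * y1)) hg) using 1
    simp only [map_mul, map_neg, algHom_C, algebraMap_eq]
    linear_combination - (y1 ^ 2 * y2) * hκ'
  · have e : GenP y1 y2 j Q 1 (j (C (κ * β) * a2) * y2 ^ 2 + j (C (κ * β) * a1) * (y1 * y2) + j (C (κ * β) * a3) * y2
        + j (C (-κ) * c2) * (y1 * y2) + j (C (-κ) * c1) * y1 ^ 2 + j (C (-κ) * c3) * y1) :=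
      (((((s2.mulj (hC _ h2) le_rfl).add (GenP.jy12 (hC _ h1))).add (GenP.jy2 (hC _ h3))).add
        (GenP.jy12 (hC _ g2))).add (s1.mulj (hC _ g1) le_rfl)).add (GenP.jy1 (hC _ g3))
    refine e.congr ?_
    convert add_mem (Q.mul_mem_left (C κ * y1) hg) (Q.mul_mem_left (- (C κ * C β * y2)) hf) using 1
    simp only [map_mul, map_neg, algHom_C, algebraMap_eq]
    linear_combination - (y1 * y2 ^ 2) * hκ'

theorem genP_main {b β κ : K} (hκ : κ * (1 - b * β) = 1) {a1 a2 a3 c1 c2 c3 : MvPolynomial (Fin d) K}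
    (h1 : a1.totalDegree ≤ 1) (h2 : a2.totalDegree ≤ 1) (h3 : a3.totalDegree ≤ 2)
    (g1 : c1.totalDegree ≤ 1) (g2 : c2.totalDegree ≤ 1) (g3 : c3.totalDegree ≤ 2)
    (hf : y1 ^ 2 + C b * y1 * y2 + j a1 * y1 + j a2 * y2 + j a3 ∈ Q)
    (hg : y2 ^ 2 + C β * y1 * y2 + j c1 * y1 + j c2 * y2 + j c3 ∈ Q)
    (hX : ∀ i, ∃ (α β : K) (l : MvPolynomial (Fin d) K), l.IsHomogeneous 1 ∧
        X i = C α * y1 + C β * y2 + j l) (n : ℕ) (t : MvPolynomial (Fin N) K) (ht : t.totalDegree ≤ n) :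
    GenP y1 y2 j Q n t := by
  have s1 := genP_sq h1 h2 h3 hf
  have s2 := genP_sq g1 g2 g3 hg
  obtain ⟨s3, s4⟩ := genP_sqmul hκ h1 h2 h3 g1 g2 g3 hf hg
  have my1 : ∀ n s, GenP y1 y2 j Q n s → GenP y1 y2 j Q (n + 1) (y1 * s) := by
    rintro n s ⟨u0, u1, u2, u3, k0, k1, k2, k3, k⟩
    have e : GenP y1 y2 j Q (n + 1) (j u0 * y1 + j u1 * y1 ^ 2 + j u2 * (y1 * y2) + j u3 * (y1 ^ 2 * y2)) :=
      (((GenP.jy1 k0).add (s1.mulj k1 le_rfl)).add (GenP.jy12 k2)).add (s3.mulj k3 le_rfl)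
    refine e.congr ?_
    convert Q.mul_mem_left y1 k using 1; ring
  have my2 : ∀ n s, GenP y1 y2 j Q n s → GenP y1 y2 j Q (n + 1) (y2 * s) := by
    rintro n s ⟨u0, u1, u2, u3, k0, k1, k2, k3, k⟩
    have e : GenP y1 y2 j Q (n + 1) (j u0 * y2 + j u2 * y2 ^ 2 + j u1 * (y1 * y2) + j u3 * (y1 * y2 ^ 2)) :=
      (((GenP.jy2 k0).add (s2.mulj k2 le_rfl)).add (GenP.jy12 k1)).add (s4.mulj k3 le_rfl)
    refine e.congr ?_
    convert Q.mul_mem_left y2 k using 1; ring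
  have hCC : ∀ (r : K) n s, GenP y1 y2 j Q n s → GenP y1 y2 j Q n (C r * s) := by
    intro r n s hs
    have := hs.mulj (a := C r) (k := 0) (m := n) (by rw [totalDegree_C]) (by omega)
    rwa [algHom_C, algebraMap_eq] at this
  have hlin : ∀ l : MvPolynomial (Fin N) K, l.IsHomogeneous 1 → ∀ n s, GenP y1 y2 j Q n s →
      GenP y1 y2 j Q (n + 1) (s * l) := by
    intro l hl n s hs
    obtain ⟨α, β', m, hm, rfl⟩ := gen_lin hX hl
    have := ((hCC α _ _ (my1 _ _ hs)).add (hCC β' _ _ (my2 _ _ hs))).add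
      (hs.mulj (m := n + 1) hm.totalDegree_le (by omega))
    convert this using 1; ring
  have hhom : ∀ n (s : MvPolynomial (Fin N) K), s.IsHomogeneous n → GenP y1 y2 j Q n s := by
    intro n
    induction n with
    | zero =>
      intro s hs
      obtain ⟨c, rfl⟩ := hom_const_of_totalDegree (Nat.le_zero.1 hs.totalDegree_le)
      have := GenP.jj (y1 := y1) (y2 := y2) (j := j) (Q := Q) (n := 0) (a := C c) (by rw [totalDegree_C]; omega)
      rwa [algHom_C, algebraMap_eq] at this
    | succ n ih =>
      intro s hs
      rw [← mem_homogeneousSubmodule, ← homogeneousSubmodule_one_pow, pow_succ,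
        homogeneousSubmodule_one_pow] at hs
      refine Submodule.mul_induction_on hs ?_ ?_
      · intro m hm l hl
        exact hlin l hl n m (ih m hm)
      · intro x y hx hy
        exact hx.add hy
  rw [← sum_homogeneousComponent t]
  refine Finset.sum_induction _ (GenP y1 y2 j Q n) (fun _ _ => GenP.add) ?_ ?_
  · exact ⟨0, 0, 0, 0, by simp, by simp, by simp, by simp, by simp⟩
  · intro i hi
    exact (hhom i _ (homogeneousComponent_isHomogeneous i t)).mono (by simp at hi; omega)

end GENP

section MULT

open Module

theorem mult_card (K : Type*) [Field K] (d m : ℕ) :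
    finrank K (restrictTotalDegree (Fin d) K m) ≤ (m + d).choose d := by
  classical
  let b := basisRestrictSupport K {n : Fin d →₀ ℕ | (n.sum fun _ e => e) ≤ m}
  have h1 : finrank K (restrictTotalDegree (Fin d) K m)
      = Nat.card {n : Fin d →₀ ℕ | (n.sum fun _ e => e) ≤ m} := finrank_eq_nat_card_basis b
  rw [h1]
  let φ : {n : Fin d →₀ ℕ | (n.sum fun _ e => e) ≤ m} →
      (Finset.univ : Finset (Fin (d+1))).finsuppAntidiag m := fun n =>
    ⟨Finsupp.cons (m - (n.1.sum fun _ e => e)) n.1, by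
      rw [Finset.mem_finsuppAntidiag]
      refine ⟨?_, Finset.subset_univ _⟩
      have := n.2
      simp only [Set.mem_ofPred_eq] at this
      rw [Fin.sum_univ_succ]
      simp only [Finsupp.cons_zero, Finsupp.cons_succ]
      rw [Finsupp.sum_fintype _ _ (fun _ => rfl)] at this ⊢
      omega⟩
  have hφ : Function.Injective φ := by
    intro x y h
    have h' := congrArg Subtype.val h
    simp only [φ] at h'
    apply Subtype.ext
    have := congrArg Finsupp.tail h'
    simpa [Finsupp.tail_cons] using this
  refine (Nat.card_le_card_of_injective φ hφ).trans ?_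
  rw [Nat.card_eq_fintype_card, Fintype.card_coe, Finset.card_finsuppAntidiag_nat_eq_choose]
  simp only [Finset.card_univ, Fintype.card_fin]
  rw [show d + 1 + m - 1 = m + d by omega, Nat.choose_symm_add]

theorem mult_rank {K : Type*} [Field K] {d : ℕ} {B : Type*} [AddCommGroup B] [Module K B]
    [Module (MvPolynomial (Fin d) K) B] [IsScalarTower K (MvPolynomial (Fin d) K) B]
    [Module.Finite (MvPolynomial (Fin d) K) B]
    (hT : ∀ (a : MvPolynomial (Fin d) K) (b : B), a • b = 0 → a = 0 ∨ b = 0)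
    (g : Fin 4 → B) (V : ℕ → Submodule K B)
    (hV : ∀ n, ∀ v ∈ V n, ∃ u : Fin 4 → MvPolynomial (Fin d) K,
      (∀ i, (u i).totalDegree ≤ n + 2) ∧ v = ∑ i, u i • g i) :
    ∃ c, ∀ n, finrank K (V n) ≤ finrank (MvPolynomial (Fin d) K) B * (n + c + d).choose d := by
  classical
  set A := MvPolynomial (Fin d) K
  set r := finrank A B with hr
  obtain ⟨f, hf⟩ := exists_linearIndependent_of_le_finrank (R := A) (M := B) (n := r) le_rfl
  have hex : ∃ a : A, a ≠ 0 ∧ ∀ b : B, a • b ∈ Submodule.span A (Set.range f) := by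
    have h1 : finrank A (Submodule.span A (Set.range f)) = r := by
      rw [finrank_span_eq_card hf, Fintype.card_fin]
    have h2 := Submodule.finrank_quotient_add_finrank (Submodule.span A (Set.range f))
    have h3 : finrank A (B ⧸ Submodule.span A (Set.range f)) = 0 := by omega
    rw [Module.finrank_eq_zero_iff_isTorsion] at h3
    obtain ⟨a, ha, ha'⟩ := Submodule.annihilator_top_inter_nonZeroDivisors h3
    refine ⟨a, nonZeroDivisors.ne_zero ha', fun b => ?_⟩
    have := Submodule.mem_annihilator.1 ha (Submodule.Quotient.mk b) trivial
    rwa [← Submodule.Quotient.mk_smul, Submodule.Quotient.mk_eq_zero] at this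
  obtain ⟨a, ha, hab⟩ := hex
  have hc : ∀ i, ∃ c : Fin r → A, ∑ k, c k • f k = a • g i := fun i =>
    Submodule.mem_span_range_iff_exists_fun A |>.1 (hab (g i))
  choose c hc using hc
  let e := ∑ i, ∑ k, (c i k).totalDegree
  have he : ∀ i k, (c i k).totalDegree ≤ e := fun i k =>
    (Finset.single_le_sum (f := fun k => (c i k).totalDegree) (fun _ _ => Nat.zero_le _)
      (Finset.mem_univ k)).trans
    (Finset.single_le_sum (f := fun i => ∑ k, (c i k).totalDegree) (fun _ _ => Nat.zero_le _)
      (Finset.mem_univ i))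
  refine ⟨e + 2, fun n => ?_⟩
  let W := restrictTotalDegree (Fin d) K (n + (e + 2))
  let Φ : (Fin r → W) →ₗ[K] B :=
    { toFun := fun w => ∑ k, (w k : A) • f k
      map_add' := fun x y => by
        simp [add_smul, Finset.sum_add_distrib]
      map_smul' := fun x y => by
        simp [Finset.smul_sum] }
  let M : B →ₗ[K] B := 
    { toFun := fun b => a • b
      map_add' := fun x y => smul_add _ _ _
      map_smul' := fun x y => by
        simp only [RingHom.id_apply]
        rw [← algebraMap_smul A x y, ← algebraMap_smul A x (a • y), smul_comm] }
  have hM : Function.Injective M := by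
    rw [injective_iff_map_eq_zero]
    intro b hb
    exact (hT a b hb).resolve_left ha
  have hle : (V n).map M ≤ LinearMap.range Φ := by
    rintro _ ⟨v, hv, rfl⟩
    obtain ⟨u, hu, rfl⟩ := hV n v hv
    refine ⟨fun k => ⟨∑ i, u i * c i k, ?_⟩, ?_⟩
    · rw [mem_restrictTotalDegree]
      refine totalDegree_finsetSum_le fun i _ => ?_
      refine (totalDegree_mul _ _).trans ?_
      have := hu i
      have := he i k
      omega
    · change ∑ k, (∑ i, u i * c i k) • f k = a • ∑ i, u i • g i
      simp only [Finset.sum_smul, Finset.smul_sum]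
      rw [Finset.sum_comm]
      refine Finset.sum_congr rfl fun i _ => ?_
      rw [smul_comm, ← hc i, Finset.smul_sum]
      simp only [mul_smul]
  have h1 : finrank K (V n) = finrank K ((V n).map M) := 
    (LinearEquiv.finrank_eq (Submodule.equivMapOfInjective M hM (V n)))
  rw [h1]
  refine (Submodule.finrank_mono hle).trans ((LinearMap.finrank_range_le Φ).trans ?_)
  rw [finrank_pi_fintype]
  simp only [Finset.sum_const, Finset.card_univ, Fintype.card_fin, smul_eq_mul]
  exact Nat.mul_le_mul_left _ (mult_card K d _)

theorem mult_dim {A B : Type*} [CommRing A] [IsDomain A] [CommRing B] [IsDomain B] [Algebra A B]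
    [Module.Finite A B] (h : Function.Injective (algebraMap A B)) :
    ringKrullDim A ≤ ringKrullDim B := by
  have : Algebra.IsIntegral A B := inferInstance
  refine iSup_le fun l => ?_
  obtain ⟨Q, -, hQ, hQ'⟩ := Ideal.exists_ideal_over_prime_of_isIntegral_of_isPrime
    l.head.asIdeal (⊥ : Ideal B) (by
      rw [← RingHom.ker_eq_comap_bot, (RingHom.injective_iff_ker_eq_bot _).1 h]; exact bot_le)
  have : Q.LiesOver l.head.asIdeal := ⟨hQ'.symm⟩
  obtain ⟨L, hL, -⟩ := Ideal.exists_ltSeries_of_hasGoingUp l Q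
  rw [← hL]
  exact le_iSup (fun L : LTSeries (PrimeSpectrum B) => (L.length : WithBot ℕ∞)) L

theorem mult_asym (P : Polynomial ℚ) (d d' r c : ℕ) (hd : d ≤ d') (hP : P.natDegree = d')
    (h3 : (3 : ℚ) = P.leadingCoeff * d'.factorial)
    (h : ∀ᶠ n : ℕ in atTop, P.eval ((n + 1 : ℕ) : ℚ) ≤ r * ((n + c + d).choose d : ℕ)) : 3 ≤ r := by
  by_contra hr
  push Not at hr
  have hr : (r : ℚ) ≤ 2 := by exact_mod_cast Nat.le_of_lt_succ hr
  have hl : 0 < P.leadingCoeff := by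
    by_contra hl
    push Not at hl
    have : (0:ℚ) ≤ d'.factorial := by positivity
    nlinarith
  let T : Polynomial ℚ := Polynomial.C (2 / (d.factorial : ℚ)) * (Polynomial.X + Polynomial.C ((c + d : ℕ) : ℚ)) ^ d
  have hTm : ((Polynomial.X + Polynomial.C ((c + d : ℕ) : ℚ)) ^ d).Monic := (Polynomial.monic_X_add_C _).pow d
  have hTd : T.natDegree = d := by
    have h0 : (2 / (d.factorial : ℚ)) ≠ 0 := by positivity
    simp only [T]
    rw [Polynomial.natDegree_C_mul h0, Polynomial.natDegree_pow, Polynomial.natDegree_X_add_C, mul_one]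
  have hTl : T.leadingCoeff = 2 / d.factorial := by
    simp only [T]
    rw [Polynomial.leadingCoeff_mul, hTm.leadingCoeff, Polynomial.leadingCoeff_C, mul_one]
  let P1 := P.comp (Polynomial.X + Polynomial.C 1)
  have hP1d : P1.natDegree = d' := by
    simp only [P1]
    rw [Polynomial.natDegree_comp, Polynomial.natDegree_X_add_C, hP, mul_one]
  have hP1l : P1.leadingCoeff = P.leadingCoeff := by
    simp only [P1]
    rw [Polynomial.leadingCoeff_comp (by rw [Polynomial.natDegree_X_add_C]; norm_num),
      Polynomial.leadingCoeff_X_add_C, one_pow, mul_one]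
  have hlt : 0 < (P1 - T).leadingCoeff := by
    rcases hd.lt_or_eq with hd | hd
    · rw [Polynomial.leadingCoeff_sub_of_degree_lt, hP1l]
      · exact hl
      · apply Polynomial.degree_lt_degree; omega
    · have h0 : (0:ℚ) < d'.factorial := by positivity
      have : P1.leadingCoeff - T.leadingCoeff = 1 / d'.factorial := by
        rw [hP1l, hTl, hd]; field_simp; linarith
      have h1 : (0:ℚ) < 1 / d'.factorial := by positivity
      rw [Polynomial.leadingCoeff_sub_of_degree_eq]
      · rw [this]; exact h1
      · rw [Polynomial.degree_eq_natDegree, Polynomial.degree_eq_natDegree, hTd, hP1d, hd]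
        · rintro h
          rw [h, Polynomial.leadingCoeff_zero] at hTl
          have : (0:ℚ) < 2 / d.factorial := by positivity
          exact this.ne hTl
        · rintro h; rw [h] at hP1l; simp at hP1l; rw [← hP1l] at hl; simp at hl
      · intro h
        rw [← this, h, sub_self] at h1
        exact lt_irrefl _ h1
  have hev : ∀ᶠ x : ℚ in atTop, 0 < (P1 - T).eval x := by
    by_cases hdeg : 0 < (P1 - T).degree
    · exact (Polynomial.tendsto_atTop_of_leadingCoeff_nonneg _ hdeg hlt.le).eventually_gt_atTop 0
    · rw [Polynomial.eq_C_of_degree_le_zero (not_lt.1 hdeg)] at hlt ⊢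
      simp only [Polynomial.leadingCoeff_C] at hlt
      simp only [Polynomial.eval_C]
      exact Eventually.of_forall fun _ => hlt
  obtain ⟨n, h1, h2⟩ := ((tendsto_natCast_atTop_atTop.eventually hev).and h).exists
  have h4 := Nat.choose_le_pow_div (α := ℚ) d (n + c + d)
  have h5 : P1.eval (n : ℚ) = P.eval ((n + 1 : ℕ) : ℚ) := by
    simp [P1]
  have h6 : T.eval (n : ℚ) = 2 * (((n + c + d : ℕ) : ℚ) ^ d / d.factorial) := by
    simp [T]; ring
  rw [Polynomial.eval_sub, h5, h6] at h1
  have h7 : (0:ℚ) ≤ ((n + c + d).choose d : ℕ) := by positivity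
  nlinarith

end MULT

section MULT2

open Module

theorem mult_trunc {K : Type u} [Field K] {N : ℕ} (t : MvPolynomial (Fin N) K) (n : ℕ) :
    t - ∑ i ∈ Finset.range (n + 1), homogeneousComponent i t ∈ (idealOfVars (Fin N) K) ^ (n + 1) := by
  rw [mem_pow_idealOfVars_iff]
  intro x hx
  by_contra hlt
  push Not at hlt
  rw [MvPolynomial.mem_support_iff] at hx
  apply hx
  simp only [coeff_sub, coeff_sum, coeff_homogeneousComponent]
  rw [Finset.sum_ite_eq, if_pos (Finset.mem_range.2 hlt), sub_self]

theorem mult_length {K : Type u} [Field K] {N : ℕ} (p : Ideal (MvPolynomial (Fin N) K)) (n k : ℕ)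
    {B : Type*} [CommRing B] [Algebra K B] (mk : MvPolynomial (Fin N) K →ₐ[K] B)
    (hmk : Function.Surjective mk) (hker : ∀ t, mk t = 0 ↔ t ∈ p)
    (h : moduleLength (MvPolynomial (Fin N) K)
      (MvPolynomial (Fin N) K ⧸ (p ⊔ maxIdeal K (Fin N) ^ (n + 1))) = ((k : ℕ∞) : WithBot ℕ∞)) :
    k ≤ finrank K ((restrictTotalDegree (Fin N) K n).map mk.toLinearMap) := by
  set R := MvPolynomial (Fin N) K
  set J := p ⊔ maxIdeal K (Fin N) ^ (n + 1) with hJ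
  let g : R →ₗ[K] (R ⧸ J) := (Ideal.Quotient.mkₐ K J).toLinearMap
  have hg : LinearMap.ker mk.toLinearMap ≤ LinearMap.ker g := fun t ht =>
    Ideal.Quotient.eq_zero_iff_mem.2 (Ideal.mem_sup_left ((hker t).1 ht))
  let ψ : B →ₗ[K] (R ⧸ J) := (Submodule.liftQ _ g hg).comp
    (mk.toLinearMap.quotKerEquivOfSurjective hmk).symm.toLinearMap
  have hψ : ∀ t, ψ (mk t) = Ideal.Quotient.mk J t := by
    intro t
    have : (mk.toLinearMap.quotKerEquivOfSurjective hmk).symm (mk t) = Submodule.Quotient.mk t := by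
      rw [LinearEquiv.symm_apply_eq]; rfl
    simp only [ψ, LinearMap.comp_apply, LinearEquiv.coe_coe]
    rw [this]; rfl
  let V := (restrictTotalDegree (Fin N) K n).map mk.toLinearMap
  let φ : V →ₗ[K] (R ⧸ J) := ψ.comp V.subtype
  have hφ : Function.Surjective φ := by
    intro x
    obtain ⟨t, rfl⟩ := Ideal.Quotient.mk_surjective x
    let t' : R := ∑ i ∈ Finset.range (n + 1), homogeneousComponent i t
    have ht' : t' ∈ restrictTotalDegree (Fin N) K n := by
      rw [mem_restrictTotalDegree]
      refine totalDegree_finsetSum_le fun i hi => ?_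
      have := (homogeneousComponent_isHomogeneous i t).totalDegree_le
      have := Finset.mem_range.1 hi
      omega
    refine ⟨⟨_, Submodule.mem_map_of_mem ht'⟩, ?_⟩
    change ψ (mk t') = Ideal.Quotient.mk J t
    rw [hψ, eq_comm, Ideal.Quotient.eq]
    refine Ideal.mem_sup_right ?_
    change t - t' ∈ (idealOfVars (Fin N) K) ^ (n + 1)
    exact mult_trunc t n
  have hf : Module.Finite K V := by
    have : Module.Finite K (restrictTotalDegree (Fin N) K n) := inferInstance
    exact Module.Finite.map _ _
  have hf' : Module.Finite K (R ⧸ J) := Module.Finite.of_surjective φ hφ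
  have h1 : (k : ℕ∞) = Module.length R (R ⧸ J) := by
    have := Module.coe_length R (R ⧸ J)
    rw [moduleLength, ← this] at h
    exact_mod_cast h.symm
  have h2 : Module.length R (R ⧸ J) ≤ Module.length K (R ⧸ J) := by
    have := Submodule.length_le_length_restrictScalars (R := R) (M := R ⧸ J) K ⊤
    rw [Submodule.restrictScalars_top] at this
    simpa [Module.length_top] using this
  have h3 := Module.length_le_of_surjective φ hφ
  rw [Module.length_eq_finrank K V] at h3
  exact_mod_cast h1.le.trans (h2.trans h3)

theorem mult_main {K : Type u} [Field K] {N d : ℕ} (p : Ideal (MvPolynomial (Fin N) K))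
    (y1 y2 : MvPolynomial (Fin N) K)
    (j : MvPolynomial (Fin d) K →ₐ[K] MvPolynomial (Fin N) K)
    {B : Type u} [CommRing B] [IsDomain B] [Algebra K B] [Algebra (MvPolynomial (Fin d) K) B]
    [IsScalarTower K (MvPolynomial (Fin d) K) B]
    (mk : MvPolynomial (Fin N) K →ₐ[K] B)
    (hmk : Function.Surjective mk) (hker : ∀ t, mk t = 0 ↔ t ∈ p)
    (hj : ∀ a : MvPolynomial (Fin d) K, algebraMap (MvPolynomial (Fin d) K) B a = mk (j a))
    [Module.Finite (MvPolynomial (Fin d) K) B]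
    (hG : ∀ n t, t.totalDegree ≤ n → GenP y1 y2 j p n t)
    (h0 : ∀ a, j a ∈ p → a = 0)
    (hpe : IsHSMultiplicity (MvPolynomial (Fin N) K) (maxIdeal K (Fin N)) p 3) :
    3 ≤ finrank (MvPolynomial (Fin d) K) B := by
  obtain ⟨d', P, hd', hP, h3, hev⟩ := hpe
  have hinj : Function.Injective (algebraMap (MvPolynomial (Fin d) K) B) := by
    rw [injective_iff_map_eq_zero]
    intro a ha
    rw [hj, hker] at ha
    exact h0 a ha
  have hd : d ≤ d' := by
    have h := mult_dim hinj
    have e : ringKrullDim B = ringKrullDim (MvPolynomial (Fin N) K ⧸ p) := by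
      have hp : p = RingHom.ker mk.toRingHom := by
        ext t; rw [← hker]; rfl
      rw [hp]
      exact (ringKrullDim_eq_of_ringEquiv (RingHom.quotientKerEquivOfSurjective hmk)).symm
    rw [e, hd', MvPolynomial.ringKrullDim_of_isNoetherianRing, ringKrullDim_eq_zero_of_field,
      zero_add, Nat.card_fin] at h
    exact_mod_cast h
  obtain ⟨c, hc⟩ := mult_rank (K := K) (d := d) (B := B) (by
      intro a b hab
      rw [Algebra.smul_def, mul_eq_zero] at hab
      refine hab.imp (fun h => ?_) id
      exact hinj (h.trans (map_zero _).symm))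
    ![1, mk y1, mk y2, mk (y1 * y2)]
    (fun n => (restrictTotalDegree (Fin N) K n).map mk.toLinearMap) (by
      rintro n _ ⟨t, ht, rfl⟩
      obtain ⟨u0, u1, u2, u3, hu0, hu1, hu2, hu3, h⟩ := hG n t ((mem_restrictTotalDegree _ _ _).1 ht)
      refine ⟨![u0, u1, u2, u3], ?_, ?_⟩
      · intro i; fin_cases i
        · exact hu0
        · exact hu1.trans (by omega)
        · exact hu2.trans (by omega)
        · exact hu3.trans (by omega)
      · rw [← hker, map_sub, sub_eq_zero] at h
        refine Eq.trans h ?_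
        simp [Fin.sum_univ_four, Algebra.smul_def, hj])
  refine mult_asym P d d' _ c hd hP (by exact_mod_cast h3) ?_
  filter_upwards [(tendsto_add_atTop_nat 1).eventually hev] with n hn
  obtain ⟨k, hk, hk'⟩ := hn
  rw [← hk]
  exact_mod_cast (mult_length p n k mk hmk hker hk').trans (hc n)

end MULT2

section ASM

open Module

theorem quot_exists {K A R : Type u} [Field K] [CommRing A] [Algebra K A] [CommRing R] [Algebra K R]
    (j : A →ₐ[K] R) (Q : Ideal R) :
    ∃ (B : Type u) (_ : CommRing B) (_ : Algebra K B) (_ : Algebra A B) (_ : IsScalarTower K A B)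
      (mk : R →ₐ[K] B), Function.Surjective mk ∧ (∀ t, mk t = 0 ↔ t ∈ Q) ∧
      (∀ a, algebraMap A B a = mk (j a)) ∧ (Q.IsPrime → IsDomain B) := by
  letI : Algebra A (R ⧸ Q) := ((Ideal.Quotient.mkₐ K Q).comp j).toRingHom.toAlgebra
  refine ⟨R ⧸ Q, inferInstance, inferInstance, inferInstance, ?_, Ideal.Quotient.mkₐ K Q,
    Ideal.Quotient.mkₐ_surjective K Q, fun t => Ideal.Quotient.eq_zero_iff_mem, fun a => rfl, 
    fun _ => Ideal.Quotient.isDomain Q⟩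
  exact IsScalarTower.of_algebraMap_eq fun x => (((Ideal.Quotient.mkₐ K Q).comp j).commutes x).symm

theorem quot_gen {K : Type u} [Field K] {N d : ℕ} (Q : Ideal (MvPolynomial (Fin N) K))
    (y1 y2 : MvPolynomial (Fin N) K)
    (j : MvPolynomial (Fin d) K →ₐ[K] MvPolynomial (Fin N) K)
    {B : Type u} [CommRing B] [Algebra K B] [Algebra (MvPolynomial (Fin d) K) B]
    (mk : MvPolynomial (Fin N) K →ₐ[K] B)
    (hmk : Function.Surjective mk) (hker : ∀ t, mk t = 0 ↔ t ∈ Q)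
    (hj : ∀ a : MvPolynomial (Fin d) K, algebraMap (MvPolynomial (Fin d) K) B a = mk (j a))
    (hG : ∀ n t, t.totalDegree ≤ n → GenP y1 y2 j Q n t) :
    Submodule.span (MvPolynomial (Fin d) K) (Set.range ![1, mk y1, mk y2, mk (y1 * y2)]) = ⊤ := by
  rw [eq_top_iff]
  rintro x -
  obtain ⟨t, rfl⟩ := hmk x
  obtain ⟨u0, u1, u2, u3, -, -, -, -, h⟩ := hG _ t le_rfl
  rw [Submodule.mem_span_range_iff_exists_fun]
  refine ⟨![u0, u1, u2, u3], ?_⟩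
  rw [← hker, map_sub, sub_eq_zero] at h
  rw [h]
  simp [Fin.sum_univ_four, Algebra.smul_def, hj]

theorem mid {K : Type u} [Field K] {N d : ℕ} (Q p : Ideal (MvPolynomial (Fin N) K)) (hp : p.IsPrime)
    (hQp : Q ≤ p)
    (y1 y2 : MvPolynomial (Fin N) K)
    (j : MvPolynomial (Fin d) K →ₐ[K] MvPolynomial (Fin N) K)
    (hGQ : ∀ n t, t.totalDegree ≤ n → GenP y1 y2 j Q n t)
    (htf : ∀ a t, j a * t ∈ Q → a = 0 ∨ t ∈ Q)
    (h0 : ∀ a, j a ∈ p → a = 0)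
    (hpe : IsHSMultiplicity (MvPolynomial (Fin N) K) (maxIdeal K (Fin N)) p 3)
    (q : MvPolynomial (Fin N) K) (hq : q ∈ p) (hqQ : q ∉ Q) (y : MvPolynomial (Fin N) K) :
    ∃ α, ∀ r ∈ p, (y - j α) * r ∈ Q := by
  have hGp : ∀ n t, t.totalDegree ≤ n → GenP y1 y2 j p n t := by
    intro n t ht
    obtain ⟨u0, u1, u2, u3, k0, k1, k2, k3, h⟩ := hGQ n t ht
    exact ⟨u0, u1, u2, u3, k0, k1, k2, k3, hQp h⟩
  obtain ⟨B, _, _, _, _, mB, sB, kB, jB, dB⟩ := quot_exists j p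
  obtain ⟨E, _, _, _, _, mE, sE, kE, jE, -⟩ := quot_exists j Q
  have := dB hp
  have gE := quot_gen Q y1 y2 j mE sE kE jE hGQ
  have gB := quot_gen p y1 y2 j mB sB kB jB hGp
  have : Module.Finite (MvPolynomial (Fin d) K) B := ⟨⟨_, by
    rw [← gB]; congr 1; exact (Set.finite_range _).coe_toFinset⟩⟩
  have : Module.Finite (MvPolynomial (Fin d) K) E := ⟨⟨_, by
    rw [← gE]; congr 1; exact (Set.finite_range _).coe_toFinset⟩⟩
  have h3 := mult_main p y1 y2 j mB sB kB jB hGp h0 hpe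
  have hT : ∀ (a : MvPolynomial (Fin d) K) (c : E), a • c = 0 → a = 0 ∨ c = 0 := by
    intro a c hac
    obtain ⟨t, rfl⟩ := sE c
    rw [Algebra.smul_def, jE, ← map_mul, kE] at hac
    rw [kE]
    exact htf a t hac
  -- the comparison map
  have hle : ∀ t, mE t = 0 → mB t = 0 := fun t ht => (kB t).2 (hQp ((kE t).1 ht))
  let π : E →ₗ[MvPolynomial (Fin d) K] B :=
    { toFun := fun c => mB (sE c).choose
      map_add' := fun x y => by
        rw [← map_add, ← sub_eq_zero, ← map_sub]
        apply hle
        rw [map_sub, map_add, (sE x).choose_spec, (sE y).choose_spec, (sE (x + y)).choose_spec, sub_self]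
      map_smul' := fun a x => by
        rw [RingHom.id_apply, Algebra.smul_def a (mB _), jB, ← map_mul, ← sub_eq_zero, ← map_sub]
        apply hle
        rw [map_sub, map_mul, (sE x).choose_spec, (sE (a • x)).choose_spec, Algebra.smul_def, jE, sub_self] }
  have hπm : ∀ t, π (mE t) = mB t := by
    intro t
    change mB (sE (mE t)).choose = mB t
    rw [← sub_eq_zero, ← map_sub]
    apply hle
    rw [map_sub, (sE (mE t)).choose_spec, sub_self]
  have hπ : Function.Surjective π := by
    intro b
    obtain ⟨t, rfl⟩ := sB b
    exact ⟨mE t, hπm t⟩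
  have hN := core_rank _ gE π hπ h3
  have hmem : ∀ t ∈ p, mE t ∈ LinearMap.ker π := by
    intro t ht
    rw [LinearMap.mem_ker, hπm, kB]; exact ht
  have hq0 : mE q ≠ 0 := fun h => hqQ ((kE q).1 h)
  obtain ⟨α, hα⟩ := core_a hT _ hN (hmem q hq) (y := mE y)
    (by rw [← map_mul]; exact hmem _ (p.mul_mem_left _ hq)) hq0
  refine ⟨α, fun r hr => ?_⟩
  have := core_b hT _ hN (hmem q hq) (hmem r hr) hq0 hα
  rw [jE, ← map_sub, ← map_mul, kE] at this
  exact this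

end ASM
/-- over an algebraically closed field, a height two ideal generated by
quadrics contained in a prime `p` with `ht p = 2` and `e(R/p) = 3` has `pd(R/I) = 2`. -/
theorem stmt4 (K : Type u) [Field K] [IsAlgClosed K] (N : ℕ)
    (I : Ideal (MvPolynomial (Fin N) K)) (S : Set (MvPolynomial (Fin N) K))
    (hS : ∀ f ∈ S, MvPolynomial.IsHomogeneous f 2)
    (hI : I = Ideal.span S)
    (hht : idealHeight I = 2)
    (p : Ideal (MvPolynomial (Fin N) K)) (hp : p.IsPrime) (hIp : I ≤ p)
    (hpht : idealHeight p = 2)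
    (hpe : IsHSMultiplicity (MvPolynomial (Fin N) K) (maxIdeal K (Fin N)) p 3) :
    projDim (MvPolynomial (Fin N) K) (MvPolynomial (Fin N) K ⧸ I) = (2 : ℕ∞) := by
  classical
  subst hI
  have hS' : Submodule.span K S ≤ homogeneousSubmodule (Fin N) K 2 :=
    Submodule.span_le.2 fun f hf => (mem_homogeneousSubmodule 2 f).2 (hS f hf)
  have hSI : ∀ f ∈ Submodule.span K S, f ∈ Ideal.span S := by
    intro f hf
    have : Submodule.span K S ≤ (Ideal.span S).restrictScalars K :=
      Submodule.span_le.2 fun g hg => Ideal.subset_span hg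
    exact this hf
  obtain ⟨q1, m1, q2, m2, n1, n2, rp⟩ := ht_coprime S hht
  obtain ⟨e1, e2, f1, f2, mf1, mf2, hf1, hf2, hrp, v11, v21, v12, v22, hno⟩ :=
    nf_exists ((mem_homogeneousSubmodule 2 _).1 (hS' m1)) ((mem_homogeneousSubmodule 2 _).1 (hS' m2))
      n1 n2 rp
  have hsub : Submodule.span K {q1, q2} ≤ Submodule.span K S := by
    rw [Submodule.span_le]
    rintro g (rfl | rfl) <;> assumption
  have hI1 := hSI f1 (hsub mf1)
  have hI2 := hSI f2 (hsub mf2)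
  have h10 : f1 ≠ 0 := by rintro rfl; simp at v11
  have h20 : f2 ≠ 0 := by rintro rfl; simp at v22
  have hsc : ∀ (f : MvPolynomial (Fin N) K), f.IsHomogeneous 2 → ∀ (s : K) (e : Fin N → K),
      eval (s • e) f = s ^ 2 * eval e f := by
    intro f hf s e
    obtain ⟨B, hB, h⟩ := nf_quad hf e
    have := h 0 s
    have z1 : eval (0 : Fin N → K) B = 0 := by
      rw [eval_zero]; exact nf_h0 hB
    have z2 : eval (0 : Fin N → K) f = 0 := by
      rw [eval_zero]; exact nf_h0 hf
    rw [z1, z2] at this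
    simpa using this
  have hli : LinearIndependent K ![e1, e2] := by
    rw [LinearIndependent.pair_iff]
    intro s t hst
    have a1 : s • e1 = (-t) • e2 := by
      rw [neg_smul]; exact eq_neg_of_add_eq_zero_left hst
    have b1 := congrArg (fun e => eval e f1) a1
    have b2 := congrArg (fun e => eval e f2) a1
    simp only [hsc f1 hf1, hsc f2 hf2, v11, v21, v12, v22] at b1 b2
    constructor
    · simpa using b1
    · simpa using b2.symm
  obtain ⟨d, y1, y2, j, θ, hy1, hy2, hjh, θ1, θ2, θj, hX, e11, e21, e12, e22, hev⟩ :=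
    coord_exists e1 e2 hli
  obtain ⟨b, a1, a2, a3, ha1, ha2, ha3, hfe1, hfs1⟩ := gen_norm hX hy1 hy2 e11 e21 e12 e22 hev hf1
  obtain ⟨β, c1, c2, c3, hc1, hc2, hc3, hfe2, hfs2⟩ := gen_norm hX hy1 hy2 e11 e21 e12 e22 hev hf2
  rw [v11, v21] at hfe1
  rw [v12, v22] at hfe2
  have hfe1' : f1 = y1 ^ 2 + C b * y1 * y2 + j a1 * y1 + j a2 * y2 + j a3 := by
    rw [hfe1]; simp only [C_1, C_0]; ring
  have hfe2' : f2 = y2 ^ 2 + C β * y1 * y2 + j c1 * y1 + j c2 * y2 + j c3 := by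
    rw [hfe2]; simp only [C_1, C_0]; ring
  have hne : 1 - b * β ≠ 0 := by
    intro h
    apply hno (-b)
    · rw [hfs1, v11, v21]; ring
    · rw [hfs2, v12, v22]; linear_combination h
  obtain ⟨κ, hκ⟩ : ∃ κ : K, κ * (1 - b * β) = 1 := ⟨(1 - b * β)⁻¹, inv_mul_cancel₀ hne⟩
  have hG : ∀ n t, t.totalDegree ≤ n → GenP y1 y2 j (Ideal.span {f1, f2}) n t := by
    intro n t ht
    refine genP_main hκ ha1.totalDegree_le ha2.totalDegree_le ha3.totalDegree_le
      hc1.totalDegree_le hc2.totalDegree_le hc3.totalDegree_le ?_ ?_ hX n t ht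
    · rw [← hfe1']; exact Ideal.subset_span (by simp)
    · rw [← hfe2']; exact Ideal.subset_span (by simp)
  have θC : ∀ x : K, θ (C x) = Polynomial.C (Polynomial.C (C x)) := by
    intro x
    have := θj (C x)
    rwa [show j (C x) = C x from j.commutes x] at this
  have htf : ∀ a t, j a * t ∈ Ideal.span {f1, f2} → a = 0 ∨ t ∈ Ideal.span {f1, f2} := by
    intro a t h
    by_cases ha : a = 0
    · exact Or.inl ha
    right
    have hmem : ∀ g, g ∈ Ideal.span {f1, f2} ↔ θ g ∈ Ideal.span {θ f1, θ f2} := by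
      intro g
      rw [Ideal.mem_span_pair, Ideal.mem_span_pair]
      constructor
      · rintro ⟨u, v, rfl⟩
        exact ⟨θ u, θ v, by simp only [map_add, map_mul]⟩
      · rintro ⟨u, v, huv⟩
        refine ⟨θ.symm u, θ.symm v, θ.injective ?_⟩
        simp only [map_add, map_mul, AlgEquiv.apply_symm_apply]
        exact huv
    rw [hmem] at h ⊢
    rw [map_mul, θj] at h
    refine tf_apply (C b) a1 a2 a3 (C β) c1 c2 c3 (C κ) ?_ (θ f1) (θ f2) ?_ ?_ a ha _ h
    · rw [← C_mul, ← C_1, ← C_sub, ← C_mul, hκ]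
    · rw [hfe1']; simp only [map_add, map_mul, map_pow, θ1, θ2, θj, θC]; ring
    · rw [hfe2']; simp only [map_add, map_mul, map_pow, θ1, θ2, θj, θC]; ring
  have hQp : Ideal.span {f1, f2} ≤ p := by
    rw [Ideal.span_le]
    rintro g (rfl | rfl)
    · exact hIp hI1
    · exact hIp hI2
  have hmin := ht_minimal (p := p) hpht h10 hrp (hIp hI1) (hIp hI2)
  have h0 : ∀ a, j a ∈ p → a = 0 := by
    intro a ha
    by_contra ha0
    have hpow : ∀ n t, j a ^ n * t ∈ Ideal.span {f1, f2} → t ∈ Ideal.span {f1, f2} := by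
      intro n t h
      rw [← map_pow] at h
      exact (htf _ _ h).resolve_left (pow_ne_zero _ ha0)
    obtain ⟨y, hy, hy2⟩ := Ideal.exists_mul_mem_of_mem_minimalPrimes hmin ha
    exact hy ((htf _ _ hy2).resolve_left ha0)
  refine projDim_eq_two _ (fun h => hp.ne_top (top_le_iff.1 (h ▸ hIp))) f1 f2 hI1 hI2 hrp h10 ?_
  refine endgame S hS f1 f2 hf1 hf2 h10 h20 hrp hI1 hI2 ?_
  intro q hq hqQ
  have hSp : ∀ q ∈ S, q ∈ p := fun q hq => hIp (Ideal.subset_span hq)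
  have key : ∀ y : MvPolynomial (Fin N) K, y.IsHomogeneous 1 → ∃ l : MvPolynomial (Fin d) K,
      l.IsHomogeneous 1 ∧ ∀ q' ∈ S, (y - j l) * q' ∈ Ideal.span {f1, f2} := by
    intro y hy
    obtain ⟨α, hα⟩ := mid _ p hp hQp y1 y2 j hG htf h0 hpe q (hSp q hq) hqQ y
    refine ⟨homogeneousComponent 1 α, homogeneousComponent_isHomogeneous _ _, fun q' hq' => ?_⟩
    obtain ⟨a, b, -, -, h⟩ := hom_mem_pair (m := 1) hf1 hf2 (hS q' hq') (hα q' (hSp q' hq'))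
    rw [map_sub, hom_map j hjh, homogeneousComponent_of_mem ((mem_homogeneousSubmodule 1 y).2 hy),
      if_pos rfl] at h
    rw [h]
    exact Ideal.mem_span_pair.2 ⟨a, b, rfl⟩
  obtain ⟨l1, hl1, k1⟩ := key y1 hy1
  obtain ⟨l2, hl2, k2⟩ := key y2 hy2
  have hev1 : ∀ l : MvPolynomial (Fin d) K, l.IsHomogeneous 1 → eval e1 (j l) = 0 := by
    intro l hl
    have := hev 1 0 l
    rw [one_smul, zero_smul, add_zero] at this
    rw [this]; exact nf_h0 hl
  have hev2 : ∀ l : MvPolynomial (Fin d) K, l.IsHomogeneous 1 → eval e2 (j l) = 0 := by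
    intro l hl
    have := hev 0 1 l
    rw [one_smul, zero_smul, zero_add] at this
    rw [this]; exact nf_h0 hl
  have hx := hy1.sub (hjh 1 _ hl1)
  have hy := hy2.sub (hjh 1 _ hl2)
  have hx1 : eval e1 (y1 - j l1) = 1 := by rw [map_sub, hev1 _ hl1, e11, sub_zero]
  refine ⟨y1 - j l1, y2 - j l2, hx, hy, ?_, ?_, fun q' hq' => ⟨k1 q' hq', k2 q' hq'⟩⟩
  · intro h; rw [h] at hx1; simp at hx1
  · refine hom_relprime hx hy e1 e2 hx1 ?_ ?_
    · rw [map_sub, hev2 _ hl1, e21, sub_zero]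
    · rw [map_sub, hev2 _ hl2, e22, sub_zero]
end

section
/- Let R be a polynomial ring over a field K and let I be an ideal generated by n quadrics that is contained in a prime ideal p of height two and multiplicity two, i.e., p = (x, q) where x is a linear form and q is an irreducible quadric with ht(x, q) = 2. Then pd(R/I) ≤ n. -/
open MvPolynomial Filter

universe u

open CategoryTheory

section PD
variable {R : Type u} [CommRing R]

theorem pdLE_of_has (n : ℕ) : ∀ (M : Type u) [AddCommGroup M] [Module R M],
    HasProjectiveDimensionLT (ModuleCat.of R M) (n + 1) → PdLE R n M := by
  induction n with
  | zero =>
    intro M _ _ h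
    rw [zero_add, ← projective_iff_hasProjectiveDimensionLT_one,
      ← IsProjective.iff_projective] at h
    exact h
  | succ n ih =>
    intro M _ _ h
    refine ⟨M →₀ R, inferInstance, inferInstance, inferInstance,
      Finsupp.linearCombination R (id : M → M), Finsupp.linearCombination_id_surjective R M, ?_⟩
    apply ih
    have hS := LinearMap.shortExact_shortComplexKer
      (Finsupp.linearCombination_id_surjective R M)
    refine (hS.hasProjectiveDimensionLT_X₃_iff n ?_).mp h
    exact (IsProjective.iff_projective (R := R) (M →₀ R)).mp inferInstance

/-- pd of cyclic module `R/I` at most `n`. -/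
def QPd (I : Ideal R) (n : ℕ) : Prop :=
  HasProjectiveDimensionLT (ModuleCat.of R (R ⧸ I)) (n + 1)

theorem QPd.mono {I : Ideal R} {n m : ℕ} (h : QPd I n) (hnm : n ≤ m) : QPd I m := by
  unfold QPd at *
  exact hasProjectiveDimensionLT_of_ge _ (n+1) (m+1) (by omega)

theorem ses (A B C : Ideal R) (x : R) (hA : ∀ f, f ∈ A ↔ x * f ∈ B)
    (hC : C = B ⊔ Ideal.span {x}) :
    ∃ S : ShortComplex (ModuleCat.{u} R), S.ShortExact ∧ S.X₁ = ModuleCat.of R (R ⧸ A) ∧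
      S.X₂ = ModuleCat.of R (R ⧸ B) ∧ S.X₃ = ModuleCat.of R (R ⧸ C) := by
  have hBC : B ≤ C := hC ▸ le_sup_left
  let f : (R ⧸ A) →ₗ[R] (R ⧸ B) := Submodule.mapQ A B (LinearMap.mulLeft R x)
    (fun a ha => (hA a).1 ha)
  let g : (R ⧸ B) →ₗ[R] (R ⧸ C) := Submodule.factor hBC
  have hinj : Function.Injective f := by
    rw [injective_iff_map_eq_zero]
    intro a
    obtain ⟨a, rfl⟩ := Submodule.mkQ_surjective A a
    intro h
    have h' : (Submodule.Quotient.mk (x * a) : R ⧸ B) = 0 := h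
    rw [Submodule.Quotient.mk_eq_zero] at h'
    exact (Submodule.Quotient.mk_eq_zero A).2 ((hA a).2 h')
  have hsurj : Function.Surjective g := Submodule.factor_surjective hBC
  have hex : Function.Exact f g := by
    intro b
    obtain ⟨b, rfl⟩ := Submodule.mkQ_surjective B b
    have e : g (B.mkQ b) = Submodule.Quotient.mk b := rfl
    rw [e, Submodule.Quotient.mk_eq_zero, hC]
    constructor
    · intro h
      obtain ⟨y, hy, z, hz, rfl⟩ := Submodule.mem_sup.1 h
      obtain ⟨c, rfl⟩ := Ideal.mem_span_singleton'.1 hz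
      refine ⟨Submodule.Quotient.mk c, ?_⟩
      change (Submodule.Quotient.mk (x * c) : R ⧸ B) = Submodule.Quotient.mk (y + c * x)
      rw [Submodule.Quotient.eq]
      have : x * c - (y + c * x) = -y := by ring
      rw [this]; exact neg_mem hy
    · rintro ⟨a, ha⟩
      obtain ⟨a, rfl⟩ := Submodule.mkQ_surjective A a
      have ha' : (Submodule.Quotient.mk (x * a) : R ⧸ B) = Submodule.Quotient.mk b := ha
      rw [Submodule.Quotient.eq] at ha'
      have : b = -(x * a - b) + a * x := by ring
      rw [this]
      exact Submodule.add_mem_sup (neg_mem ha') (Ideal.mem_span_singleton'.2 ⟨a, rfl⟩)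
  have h0 : g.comp f = 0 := by
    apply LinearMap.ext
    intro a
    exact (hex (f a)).2 ⟨a, rfl⟩
  refine ⟨ModuleCat.shortComplexOfCompEqZero f g h0, ?_, rfl, rfl, rfl⟩
  exact ModuleCat.shortComplex_shortExact _ hex hinj hsurj

theorem QPd.mid {A B C : Ideal R} (x : R) (hA : ∀ f, f ∈ A ↔ x * f ∈ B)
    (hC : C = B ⊔ Ideal.span {x}) {n : ℕ} (h1 : QPd A n) (h3 : QPd C n) : QPd B n := by
  obtain ⟨S, hS, e1, e2, e3⟩ := ses A B C x hA hC
  unfold QPd at *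
  rw [← e2]
  exact hS.hasProjectiveDimensionLT_X₂ _ (e1 ▸ h1) (e3 ▸ h3)

theorem QPd.add_one {P : Ideal R} (hP : P.IsPrime) (x : R) {n : ℕ} (h : QPd P n) :
    QPd (P ⊔ Ideal.span {x}) (n + 1) := by
  by_cases hx : x ∈ P
  · rw [sup_eq_left.2 ((Ideal.span_singleton_le_iff_mem P).2 hx)]
    exact h.mono (by omega)
  · obtain ⟨S, hS, e1, e2, e3⟩ := ses P P _ x
      (fun f => ⟨fun hf => P.mul_mem_left _ hf, fun hf => (hP.mem_or_mem hf).resolve_left hx⟩) rfl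
    have h' := h.mono (Nat.le_succ n)
    unfold QPd at *
    rw [← e3]
    exact hS.hasProjectiveDimensionLT_X₃ _ (e1 ▸ h) (e2 ▸ h')

theorem QPd.bot : QPd (⊥ : Ideal R) 0 := by
  unfold QPd
  rw [zero_add, ← projective_iff_hasProjectiveDimensionLT_one, ← IsProjective.iff_projective]
  exact Module.Projective.of_equiv (Submodule.quotEquivOfEqBot (⊥ : Ideal R) rfl).symm

end PD

section Lin
variable {K : Type u} [Field K] {N : ℕ}

/-- linear form with given coefficients -/
noncomputable def linF : (Fin N → K) →ₗ[K] MvPolynomial (Fin N) K :=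
  Fintype.linearCombination K (X : Fin N → MvPolynomial (Fin N) K)

theorem exists_linF {l : MvPolynomial (Fin N) K} (h : l.IsHomogeneous 1) :
    ∃ v, linF v = l := by
  have h1 : l ∈ homogeneousSubmodule (Fin N) K 1 := h
  rw [homogeneousSubmodule_one_eq_span_X] at h1
  have := (Submodule.mem_span_range_iff_exists_fun K).1 h1
  obtain ⟨c, hc⟩ := this
  exact ⟨c, by simpa [linF, Fintype.linearCombination_apply] using hc⟩

theorem lin_prime {m : ℕ} (l : Fin m → MvPolynomial (Fin N) K)
    (hl : ∀ i, (l i).IsHomogeneous 1) : (Ideal.span (Set.range l)).IsPrime := by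
  choose v hv using fun i => exists_linF (hl i)
  set J := Ideal.span (Set.range l) with hJ
  let W : Submodule K (Fin N → K) := Submodule.span K (Set.range v)
  have hWJ : ∀ w ∈ W, linF w ∈ J := by
    intro w hw
    have : W ≤ (J.restrictScalars K).comap linF := by
      rw [Submodule.span_le]
      rintro _ ⟨i, rfl⟩
      change linF (v i) ∈ J
      rw [hv]
      exact Ideal.subset_span ⟨i, rfl⟩
    exact this hw
  obtain ⟨W', hW'⟩ := Submodule.exists_isCompl W
  obtain ⟨p, hp1, hp2⟩ : ∃ p : (Fin N → K) →ₗ[K] (Fin N → K),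
      (∀ w ∈ W, p w = 0) ∧ ∀ w, w - p w ∈ W := by
    obtain ⟨g, hg⟩ := W.subtype.exists_leftInverse_of_injective W.ker_subtype
    refine ⟨LinearMap.id - W.subtype.comp g, ?_, ?_⟩
    · intro w hw
      have : g w = ⟨w, hw⟩ := LinearMap.congr_fun hg ⟨w, hw⟩
      simp [this]
    · intro w; simp
  let φ : MvPolynomial (Fin N) K →ₐ[K] MvPolynomial (Fin N) K :=
    aeval (fun i => linF (p (Pi.single i 1)))
  have hφ : ∀ w, φ (linF w) = linF (p w) := by
    intro w
    have : φ.toLinearMap ∘ₗ linF = linF ∘ₗ p := by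
      apply LinearMap.pi_ext'
      intro i
      ext1
      simp [φ, linF, Fintype.linearCombination_apply_single]
    exact LinearMap.congr_fun this w
  have hker : J = RingHom.ker φ := by
    apply le_antisymm
    · rw [hJ, Ideal.span_le]
      rintro _ ⟨i, rfl⟩
      change φ (l i) = 0
      rw [← hv, hφ, hp1 _ (Submodule.subset_span ⟨i, rfl⟩), map_zero]
    · intro f hf
      have hf : φ f = 0 := hf
      have key : (Ideal.Quotient.mkₐ K J).comp φ = Ideal.Quotient.mkₐ K J := by
        ext i
        simp only [AlgHom.comp_apply, Ideal.Quotient.mkₐ_eq_mk]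
        symm
        rw [Ideal.Quotient.eq]
        have : (X i : MvPolynomial (Fin N) K) = linF (Pi.single i 1) := by
          simp [linF, Fintype.linearCombination_apply_single]
        rw [this, hφ, ← map_sub]
        exact hWJ _ (hp2 _)
      have := AlgHom.congr_fun key f
      rw [AlgHom.comp_apply, hf, map_zero] at this
      exact Ideal.Quotient.eq_zero_iff_mem.1 this.symm
  rw [hker]
  exact RingHom.ker_isPrime _

theorem lin_pd {m : ℕ} : ∀ (l : Fin m → MvPolynomial (Fin N) K)
    (_ : ∀ i, (l i).IsHomogeneous 1), QPd (Ideal.span (Set.range l)) m := by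
  induction m with
  | zero =>
    intro l _
    rw [Set.range_eq_empty, Ideal.span_empty]
    exact QPd.bot
  | succ m ih =>
    intro l hl
    have : Ideal.span (Set.range l) =
        Ideal.span (Set.range (fun i : Fin m => l i.succ)) ⊔ Ideal.span {l 0} := by
      rw [← Ideal.span_union]
      congr 1
      ext y
      simp only [Set.mem_range, Set.mem_union, Set.mem_singleton_iff, Fin.exists_fin_succ]
      rw [or_comm, eq_comm]
    rw [this]
    exact (ih _ (fun i => hl _)).add_one (lin_prime _ (fun i => hl _)) _

theorem hc_mul (a b : MvPolynomial (Fin N) K) (i j : ℕ) (hb : b.IsHomogeneous j) :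
    homogeneousComponent (i + j) (a * b) = homogeneousComponent i a * b := by
  let := MvPolynomial.gradedAlgebra (σ := Fin N) (R := K)
  have h := DirectSum.coe_decompose_mul_add_of_right_mem
    (homogeneousSubmodule (Fin N) K) (i := i) (a := a) (j := j) (b := b) hb
  have e := fun (φ : MvPolynomial (Fin N) K) (i : ℕ) => decomposition.decompose'_apply φ i
  rw [← e, ← e]
  exact h

theorem decomp {x q g : MvPolynomial (Fin N) K} (hx : x.IsHomogeneous 1) (hq : q.IsHomogeneous 2)
    (hg : g.IsHomogeneous 2) (h : g ∈ Ideal.span {x, q}) :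
    ∃ (l : MvPolynomial (Fin N) K) (c : K), l.IsHomogeneous 1 ∧ g = l * x + C c * q := by
  obtain ⟨a, b, rfl⟩ := Ideal.mem_span_pair.1 h
  refine ⟨homogeneousComponent 1 a, coeff 0 b, homogeneousComponent_isHomogeneous _ _, ?_⟩
  rw [← homogeneousComponent_zero, ← hc_mul _ _ _ _ hx, ← hc_mul _ _ _ _ hq, zero_add,
    ← map_add, homogeneousComponent_eq_self hg]

theorem not_principal {p : Ideal (MvPolynomial (Fin N) K)} (hp : p.IsPrime)
    (hht : idealHeight p = 2) (y : MvPolynomial (Fin N) K) : p ≠ Ideal.span {y} := by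
  intro h
  have h1 : p.height ≤ 1 := by
    apply Ideal.height_le_one_of_isPrincipal_of_mem_minimalPrimes (Ideal.span {y})
    rw [← h, Ideal.minimalPrimes_eq_subsingleton_self]
    rfl
  have h2 : idealHeight p ≤ p.height := by
    have := PrimeSpectrum.height_eq_orderHeight (⟨p, hp⟩ : PrimeSpectrum _)
    change p.height = _ at this
    rw [this]
    exact iInf₂_le (⟨p, hp⟩ : PrimeSpectrum _) (le_refl p)
  rw [hht] at h2
  have := h2.trans h1
  exact absurd this (by decide)

end Lin

/-- an ideal generated by `n` quadrics contained in a prime of height two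
and multiplicity two, i.e. `p = (x, q)` with `x` a linear form and `q` an irreducible
quadric, has `pd(R/I) ≤ n`. -/
theorem stmt5 (K : Type u) [Field K] (N n : ℕ)
    (x q : MvPolynomial (Fin N) K) (hx : x.IsHomogeneous 1) (hq : q.IsHomogeneous 2)
    (hqirr : Irreducible q)
    (hprime : (Ideal.span {x, q}).IsPrime)
    (hht : idealHeight (Ideal.span {x, q}) = 2)
    (I : Ideal (MvPolynomial (Fin N) K)) (g : Fin n → MvPolynomial (Fin N) K)
    (hg : ∀ i, (g i).IsHomogeneous 2)
    (hI : I = Ideal.span (Set.range g))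
    (hle : I ≤ Ideal.span {x, q}) :
    projDim (MvPolynomial (Fin N) K) (MvPolynomial (Fin N) K ⧸ I) ≤ (n : ℕ∞) := by
  suffices h : QPd I n by
    apply sInf_le
    exact ⟨n, pdLE_of_has n _ h, rfl⟩
  have hx0 : x ≠ 0 := by
    rintro rfl
    refine not_principal hprime hht q ?_
    rw [Ideal.span_insert]; simp
  have hxl : Ideal.span {x} = Ideal.span (Set.range (fun _ : Fin 1 => x)) := by simp
  have hxp : (Ideal.span {x}).IsPrime := by
    rw [hxl]; exact lin_prime _ (fun _ => hx)
  have hxpd : QPd (Ideal.span {x}) 1 := by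
    rw [hxl]; exact lin_pd _ (fun _ => hx)
  have hppd : QPd (Ideal.span {x, q}) 2 := by
    rw [Ideal.span_insert]
    exact hxpd.add_one hxp q
  have hqx : q ∉ Ideal.span {x} := by
    intro h
    refine not_principal hprime hht x ?_
    rw [Ideal.span_insert, sup_eq_left]
    exact (Ideal.span_singleton_le_iff_mem _).2 h
  have hgI : ∀ i, g i ∈ I := fun i => hI ▸ Ideal.subset_span ⟨i, rfl⟩
  rcases n with _ | m
  · rw [hI, Set.range_eq_empty, Ideal.span_empty]
    exact QPd.bot
  rcases m with _ | m
  · have : I = ⊥ ⊔ Ideal.span {g 0} := by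
      rw [hI, bot_sup_eq]
      congr 1
      ext y
      simp [eq_comm]
    rw [this]
    exact QPd.bot.add_one Ideal.isPrime_bot _
  choose l c hl hlc using fun i => decomp hx hq (hg i) (hle (hgI i))
  by_cases hc : ∀ i, c i = 0
  · refine QPd.mid (A := Ideal.span (Set.range l)) (C := Ideal.span {x}) x ?_ ?_
      (lin_pd _ hl) (hxpd.mono (by omega))
    · have hIx : I = Ideal.span {x} * Ideal.span (Set.range l) := by
        rw [hI, Ideal.span_mul_span', Set.singleton_mul, ← Set.range_comp]
        congr 2
        ext1 i
        simp [hlc i, hc i, mul_comm]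
      intro f
      rw [hIx, Ideal.mem_span_singleton_mul]
      constructor
      · intro h; exact ⟨f, h, rfl⟩
      · rintro ⟨z, hz, h⟩
        rw [← mul_left_cancel₀ hx0 h]; exact hz
    · symm
      rw [sup_eq_right, hI, Ideal.span_le]
      rintro _ ⟨i, rfl⟩
      exact Ideal.mem_span_singleton'.2 ⟨l i, by simp [hlc i, hc i]⟩
  · push Not at hc
    obtain ⟨i, hi⟩ := hc
    let l' : Fin (m + 1) → MvPolynomial (Fin N) K := fun j =>
      l (i.succAbove j) - C (c (i.succAbove j) / c i) * l i
    have hl' : ∀ j, (l' j).IsHomogeneous 1 := by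
      intro j
      exact (hl _).sub (by simpa using (isHomogeneous_C (Fin N) (c (i.succAbove j) / c i)).mul (hl i))
    have hxl' : ∀ j, x * l' j = g (i.succAbove j) - C (c (i.succAbove j) / c i) * g i := by
      intro j
      have : C (c (i.succAbove j)) = C (c (i.succAbove j) / c i) * (C (c i) :
          MvPolynomial (Fin N) K) := by
        rw [← C_mul, div_mul_cancel₀ _ hi]
      rw [hlc (i.succAbove j), hlc i, this]
      simp only [l']
      ring
    have hqeq : q = C (c i)⁻¹ * (g i - l i * x) := by
      rw [hlc i, add_sub_cancel_left, ← mul_assoc, ← C_mul, inv_mul_cancel₀ hi, C_1, one_mul]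
    have hgx : g i ∉ Ideal.span {x} := by
      intro h
      apply hqx
      rw [hqeq]
      exact Ideal.mul_mem_left _ _ (sub_mem h (Ideal.mul_mem_left _ _
        (Ideal.mem_span_singleton_self x)))
    refine QPd.mid (A := Ideal.span (Set.range l') ⊔ Ideal.span {g i})
      (C := Ideal.span {x, q}) x ?_ ?_
      ((lin_pd _ hl').add_one (lin_prime _ hl') _) (hppd.mono (by omega))
    · have hIx : I ≤ Ideal.span {x} * Ideal.span (Set.range l') ⊔ Ideal.span {g i} := by
        rw [hI, Ideal.span_le]
        rintro _ ⟨k, rfl⟩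
        rcases Fin.eq_self_or_eq_succAbove i k with rfl | ⟨j, rfl⟩
        · exact Ideal.mem_sup_right (Ideal.mem_span_singleton_self _)
        · have : g (i.succAbove j) = x * l' j + C (c (i.succAbove j) / c i) * g i := by
            rw [hxl']; ring
          rw [this]
          exact Submodule.add_mem_sup (Ideal.mul_mem_mul (Ideal.mem_span_singleton_self _)
            (Ideal.subset_span ⟨j, rfl⟩))
            (Ideal.mul_mem_left _ _ (Ideal.mem_span_singleton_self _))
      intro f
      constructor
      · intro h
        have : Ideal.span (Set.range l') ⊔ Ideal.span {g i} ≤ I.colon {x} := by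
          rw [sup_le_iff, Ideal.span_le, Ideal.span_le]
          constructor
          · rintro _ ⟨j, rfl⟩
            rw [SetLike.mem_coe, Submodule.mem_colon_singleton, smul_eq_mul, mul_comm, hxl']
            exact sub_mem (hgI _) (Ideal.mul_mem_left _ _ (hgI _))
          · rintro _ rfl
            rw [SetLike.mem_coe, Submodule.mem_colon_singleton, smul_eq_mul, mul_comm]
            exact Ideal.mul_mem_left _ _ (hgI _)
        have := this h
        rwa [Submodule.mem_colon_singleton, smul_eq_mul, mul_comm] at this
      · intro h
        obtain ⟨y', hy', z, hz, e⟩ := Submodule.mem_sup.1 (hIx h)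
        obtain ⟨y, hy, rfl⟩ := Ideal.mem_span_singleton_mul.1 hy'
        obtain ⟨r, rfl⟩ := Ideal.mem_span_singleton'.1 hz
        have hr : r * g i ∈ Ideal.span {x} :=
          Ideal.mem_span_singleton'.2 ⟨f - y, by linear_combination -e⟩
        obtain ⟨s, rfl⟩ := Ideal.mem_span_singleton'.1 ((hxp.mem_or_mem hr).resolve_right hgx)
        have : f = y + s * g i := mul_left_cancel₀ hx0 (by linear_combination -e)
        rw [this]
        exact Submodule.add_mem_sup hy (Ideal.mul_mem_left _ _ (Ideal.mem_span_singleton_self _))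
    · apply le_antisymm
      · rw [Ideal.span_le, Set.insert_subset_iff, Set.singleton_subset_iff]
        have hxm : x ∈ I ⊔ Ideal.span {x} :=
          Ideal.mem_sup_right (Ideal.mem_span_singleton_self x)
        refine ⟨hxm, ?_⟩
        rw [SetLike.mem_coe, hqeq]
        exact Ideal.mul_mem_left _ _ (sub_mem (Ideal.mem_sup_left (hgI i))
          (Ideal.mul_mem_left _ _ hxm))
      · exact sup_le hle (Ideal.span_mono (by simp))
end
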